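/- arXiv:math/0403291 — 2 statements merged into one kernel-verified Lean document; each statement's English description precedes it below -/
import Mathlib

section
/- Let I = (a₁, …, aₙ) be a nonzero finitely generated ideal of a Prüfer v-multiplication domain R. Then each prime ideal of R minimal over I_v is minimal over some principal ideal (a_i). Moreover, if I_v has only finitely many minimal primes, then each minimal prime of I_v is the radical of a v-finite divisorial ideal (i.e., of an ideal J_v with J finitely generated). -/
/-!
In elementwise terms, `x ∈ J_v` iff every fraction `c / d` with `(c / d) J ⊆ R` satisfies
`(c / d) x ∈ R` (`mem_vIdeal_iff`), so that everything reduces to divisibility in `R`.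

* A nonzero prime `P` minimal over a divisorial ideal `B = A_v` is a `t`-prime. Indeed, if `J ≤ P` is
  finitely generated then `s J ^ N ≤ B` for some `s ∉ P` and some `N`, whence `s x ^ N ∈ B ≤ P`
  for every `x ∈ J_v`, so that `x ∈ P` (`vIdeal_le_of_mem_minimalPrimes`).
* If an ideal `L ≠ 0` has proper `t`-closure (`TProper`), then by Zorn's lemma it lies in a
  maximal `t`-ideal `M`, and `R_M` is a valuation domain; hence any two elements `a`, `b` of `R`
  satisfy `a ∣ s b` or `b ∣ s a` for some `s ∉ L` (`TProper.exists_dvd`).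

For the first claim, `P` is a `t`-prime, so some generator `a i` divides all the `a j` up to a
common factor `s ∉ P`. A prime `Q ≤ P` containing `a i` then contains `I_v`, because
`s / a i ∈ I⁻¹` gives `s x ∈ (a i)` for all `x ∈ I_v`; so `Q = P` by minimality.

For the second claim, let `Q ≠ P` be another minimal prime of `I_v`. Since `P` and `Q` are
incomparable, `P + Q` lies in no maximal `t`-ideal, so there are finitely generated `A_Q ≤ P`
and `B_Q ≤ Q` with `(A_Q + B_Q)_v = R`. With `J = I + ∑ A_Q`, a finite sum, a prime minimal over
`J_v` is a `t`-prime containing some minimal prime of `I_v`; that one cannot be any `Q ≠ P`, so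
`P` is the only minimal prime of `J_v`.
-/

/-
Definitions following S. Gabelli, E. Houston, T. G. Lucas,
"The t#-property for integral domains".

All the star-operation notions (`v`, `t`, maximal `t`-ideals, etc.) are defined for a
commutative ring `R` via its total quotient field `FractionRing R`; in all theorems `R`
is assumed to be an integral domain, so `FractionRing R` is its quotient field `K`.
-/

noncomputable section

namespace TSharpPaper

variable (R : Type*) [CommRing R]

/-- The image of an integral ideal in the quotient field, as an `R`-submodule. -/
def idealSub (I : Ideal R) : Submodule R (FractionRing R) :=
  Submodule.map (Algebra.linearMap R (FractionRing R)) I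

/-- The divisorial closure `I_v = (I⁻¹)⁻¹` of an integral ideal, as an integral ideal.
Here for a submodule `J` of `K`, `1 / J = {x ∈ K : xJ ⊆ R}` is `J⁻¹`. -/
def vIdeal (I : Ideal R) : Ideal R :=
  Submodule.comap (Algebra.linearMap R (FractionRing R))
    ((1 : Submodule R (FractionRing R)) / (1 / idealSub R I))

/-- The `t`-closure `I_t = ⋃ J_v`, the union over all nonzero finitely generated
subideals `J` of `I`. -/
def tIdeal (I : Ideal R) : Ideal R :=
  ⨆ (J : Ideal R) (_ : J.FG) (_ : J ≠ ⊥) (_ : J ≤ I), vIdeal R J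

/-- A (nonzero) integral ideal is divisorial if `I = I_v`. -/
def IsDivisorialIdeal (I : Ideal R) : Prop := I ≠ ⊥ ∧ vIdeal R I = I

/-- A (nonzero) integral ideal is a `t`-ideal if `I = I_t`. -/
def IsTIdeal (I : Ideal R) : Prop := I ≠ ⊥ ∧ tIdeal R I = I

/-- A `t`-prime is a prime `t`-ideal. -/
def IsTPrime (P : Ideal R) : Prop := P.IsPrime ∧ IsTIdeal R P

/-- The set `t-Max(R)` of maximal `t`-ideals: integral ideals maximal among proper
integral `t`-ideals. -/
def tMax : Set (Ideal R) :=
  {M | IsTIdeal R M ∧ M ≠ ⊤ ∧ ∀ J : Ideal R, IsTIdeal R J → J ≠ ⊤ → M ≤ J → J = M}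

/-- The localization `R_P` of `R` at (the complement of) a prime `P`, viewed as a subset
of the quotient field. -/
def locSet (P : Ideal R) : Set (FractionRing R) :=
  {x | ∃ r s : R, s ∉ P ∧ x * algebraMap R (FractionRing R) s = algebraMap R (FractionRing R) r}

/-- The image of `R` in its quotient field. -/
def imageR : Set (FractionRing R) := Set.range (algebraMap R (FractionRing R))

/-- `R` is a `t#`-domain if `⋂_{M ∈ 𝔐₁} R_M ≠ ⋂_{M ∈ 𝔐₂} R_M` for any two distinct
subsets `𝔐₁, 𝔐₂` of `t-Max(R)`. -/
def IsTSharp : Prop :=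
  ∀ 𝔐₁ 𝔐₂ : Set (Ideal R), 𝔐₁ ⊆ tMax R → 𝔐₂ ⊆ tMax R → 𝔐₁ ≠ 𝔐₂ →
    (⋂ M ∈ 𝔐₁, locSet R M) ≠ ⋂ M ∈ 𝔐₂, locSet R M

/-- The conductor `(R :_R u) = {r ∈ R : r·u ∈ R}` of an element `u` of the quotient
field. -/
def colonIdeal (u : FractionRing R) : Ideal R :=
  Submodule.comap (Algebra.linearMap R (FractionRing R))
    (Submodule.comap (LinearMap.mulLeft R u) (1 : Submodule R (FractionRing R)))

/-- `R` is `v`-coherent if for each nonzero finitely generated ideal `I` of `R`,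
`I⁻¹ = J_v` for some finitely generated fractional ideal `J`. -/
def IsVCoherent : Prop :=
  ∀ I : Ideal R, I ≠ ⊥ → I.FG →
    ∃ J : Submodule R (FractionRing R), J.FG ∧
      (1 : Submodule R (FractionRing R)) / idealSub R I = 1 / (1 / J)

/-- An ideal is `v`-finite if it equals `J_v` for some finitely generated ideal `J`. -/
def IsVFinite (I : Ideal R) : Prop := ∃ J : Ideal R, J.FG ∧ I = vIdeal R J

/-- `Φ(Λ)`: the set of all integral `t`-ideals `I` of `R` with `I ⊄ P` for every
`P ∈ Λ`. -/
def Phi (Λ : Set (Ideal R)) : Set (Ideal R) :=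
  {I | IsTIdeal R I ∧ ∀ P ∈ Λ, ¬ I ≤ P}

/-- `Φ(Λ)` is `v`-finite if every `t`-ideal in `Φ(Λ)` contains a `v`-finite `t`-ideal
belonging to `Φ(Λ)`. -/
def PhiVFinite (Λ : Set (Ideal R)) : Prop :=
  ∀ I ∈ Phi R Λ, ∃ J ∈ Phi R Λ, J ≤ I ∧ IsVFinite R J

/-- The generalized ring of quotients `R_{Φ(Λ)} = {x ∈ K : xI ⊆ R for some I ∈ Φ(Λ)}`. -/
def RPhi (Λ : Set (Ideal R)) : Set (FractionRing R) :=
  {x | ∃ I ∈ Phi R Λ, ∀ a ∈ I, x * algebraMap R (FractionRing R) a ∈ imageR R}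

/-- `Λ` is a set of pairwise incomparable `t`-primes of `R`. -/
def IncompTPrimes (Λ : Set (Ideal R)) : Prop :=
  (∀ P ∈ Λ, IsTPrime R P) ∧ ∀ P ∈ Λ, ∀ Q ∈ Λ, P ≤ Q → P = Q

/-- `R` is a Prüfer `v`-multiplication domain if `R_M` is a valuation domain for every
maximal `t`-ideal `M` of `R`. -/
def IsPVMD [IsDomain R] : Prop :=
  ∀ M ∈ tMax R, ∀ x : FractionRing R, x ≠ 0 → x ∈ locSet R M ∨ x⁻¹ ∈ locSet R M

/-- `R` is a Mori domain: the ascending chain condition holds on integral divisorial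
ideals. -/
def IsMori : Prop :=
  ∀ f : ℕ → Ideal R, (∀ n, IsDivisorialIdeal R (f n)) → (∀ n, f n ≤ f (n + 1)) →
    ∃ n, ∀ m, n ≤ m → f m = f n

/-- The localization `T_Q` of a subring `T` of the quotient field of `R` at (the
complement of) an ideal `Q` of `T`, viewed as a subset of the quotient field of `R`. -/
def locSetSub (T : Subring (FractionRing R)) (Q : Ideal T) : Set (FractionRing R) :=
  {x | ∃ r s : T, s ∉ Q ∧ x * (s : FractionRing R) = (r : FractionRing R)}

/-- `T` is an overring of `R`: a subring of the quotient field containing (the image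
of) `R`. -/
def IsOverring (T : Subring (FractionRing R)) : Prop :=
  ∀ r : R, algebraMap R (FractionRing R) r ∈ T

/-- The canonical ring homomorphism from `R` to an overring `T`; `M ∩ R` is the
contraction `Ideal.comap (intoOverring R T h) M`. -/
def intoOverring (T : Subring (FractionRing R)) (h : IsOverring R T) : R →+* T :=
  (algebraMap R (FractionRing R)).codRestrict T h

/-- `T` is a `t`-flat overring of `R`: `T_M = R_{M ∩ R}` for each maximal `t`-ideal `M`
of `T`. -/
def IsTFlat (T : Subring (FractionRing R)) : Prop :=
  ∃ h : IsOverring R T, ∀ M ∈ tMax (↥T),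
    locSetSub R T M = locSet R (Ideal.comap (intoOverring R T h) M)

/-- `T` is `t`-linked over `R`: for each nonzero finitely generated ideal `I` of `R` with
`(R : I) = R` one has `(T : IT) = T`. -/
def IsTLinked (T : Subring (FractionRing R)) : Prop :=
  ∀ I : Ideal R, I ≠ ⊥ → I.FG →
    (1 : Submodule R (FractionRing R)) / idealSub R I = 1 →
    {x : FractionRing R | ∀ a ∈ I, x * algebraMap R (FractionRing R) a ∈ T} =
      (T : Set (FractionRing R))

/-- `T` is a `t`-subintersection of `R`: `T = ⋂_{P ∈ Λ} R_P` for some set `Λ` of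
`t`-primes of `R`. -/
def IsTSubintersection (T : Subring (FractionRing R)) : Prop :=
  ∃ Λ : Set (Ideal R), (∀ P ∈ Λ, IsTPrime R P) ∧
    (T : Set (FractionRing R)) = ⋂ P ∈ Λ, locSet R P

/-- `(P : P) = {x ∈ K : xP ⊆ P}`, as a subring of the quotient field of `R`. -/
def colonPP (P : Ideal R) : Subring (FractionRing R) where
  carrier := {x | ∀ a ∈ P, x * algebraMap R (FractionRing R) a ∈ idealSub R P}
  one_mem' := by
    intro a ha
    rw [one_mul]
    exact Submodule.mem_map_of_mem ha
  mul_mem' := by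
    intro x y hx hy a ha
    rcases hy a ha with ⟨b, hb, hby⟩
    rw [mul_assoc, ← hby]
    exact hx b hb
  add_mem' := by
    intro x y hx hy a ha
    rw [add_mul]
    exact Submodule.add_mem _ (hx a ha) (hy a ha)
  zero_mem' := by
    intro a ha
    rw [zero_mul]
    exact Submodule.zero_mem _
  neg_mem' := by
    intro x hx a ha
    rw [neg_mul]
    exact Submodule.neg_mem _ (hx a ha)

/-- `R` is a `t#_P`-domain: for sets `Λ₁ ≠ Λ₂` of `t`-primes such that `(P + Q)_t = R`
for distinct `P ∈ Λ₁`, `Q ∈ Λ₂`, one has `R_{Φ(Λ₁)} ≠ R_{Φ(Λ₂)}`. -/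
def IsTSharpP : Prop :=
  ∀ Λ₁ Λ₂ : Set (Ideal R), (∀ P ∈ Λ₁, IsTPrime R P) → (∀ Q ∈ Λ₂, IsTPrime R Q) →
    (∀ P ∈ Λ₁, ∀ Q ∈ Λ₂, P ≠ Q → tIdeal R (P ⊔ Q) = ⊤) →
    Λ₁ ≠ Λ₂ → RPhi R Λ₁ ≠ RPhi R Λ₂

/-- A `t`-localizing system of ideals of `R`: a set of integral `t`-ideals closed under
`t`-multiplication and satisfying the two localizing-system closure properties. -/
def IsTLocalizingSystem (Φ : Set (Ideal R)) : Prop :=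
  (∀ I ∈ Φ, IsTIdeal R I) ∧
  (∀ I ∈ Φ, ∀ J ∈ Φ, tIdeal R (I * J) ∈ Φ) ∧
  (∀ I ∈ Φ, ∀ J : Ideal R, IsTIdeal R J → I ≤ J → J ∈ Φ) ∧
  (∀ I ∈ Φ, ∀ J : Ideal R, IsTIdeal R J →
    (∀ a ∈ I, tIdeal R (Submodule.colon J (Ideal.span {a})) ∈ Φ) → J ∈ Φ)

/-- The ascending chain condition on `t`-primes of `R`. -/
def ACCTPrimes : Prop :=
  ∀ f : ℕ → Ideal R, (∀ n, IsTPrime R (f n)) → (∀ n, f n ≤ f (n + 1)) →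
    ∃ n, ∀ m, n ≤ m → f m = f n

/-- The ascending chain condition on radical `t`-ideals of `R`. -/
def ACCRadicalTIdeals : Prop :=
  ∀ f : ℕ → Ideal R, (∀ n, IsTIdeal R (f n) ∧ (f n).radical = f n) →
    (∀ n, f n ≤ f (n + 1)) → ∃ n, ∀ m, n ≤ m → f m = f n

/-- A prime `P` is branched if there is a `PR_P`-primary ideal of `R_P` different from
`PR_P` (the maximal ideal of `R_P`). -/
def IsBranched (P : Ideal R) (hP : P.IsPrime) : Prop :=
  letI := hP
  ∃ Q : Ideal (Localization.AtPrime P), Q.IsPrimary ∧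
    Q ≠ IsLocalRing.maximalIdeal (Localization.AtPrime P)

/-- A prime ideal of a domain has height one. -/
def HeightOne (Q : Ideal R) : Prop :=
  Q ≠ ⊥ ∧ ∀ P : Ideal R, P.IsPrime → P < Q → P = ⊥

/-- A nonzero integral ideal `I` is `t`-invertible: `(I I⁻¹)_t = R`. -/
def IsTInvertible (I : Ideal R) : Prop :=
  tIdeal R (Submodule.comap (Algebra.linearMap R (FractionRing R))
    (idealSub R I * ((1 : Submodule R (FractionRing R)) / idealSub R I))) = ⊤

variable {σ : Type*}

/-- An upper to zero: a prime ideal `Q` of `R[{X_α}]` with `Q ∩ R = 0`. -/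
def IsUpperToZero (Q : Ideal (MvPolynomial σ R)) : Prop :=
  Q.IsPrime ∧ Ideal.comap (MvPolynomial.C : R →+* MvPolynomial σ R) Q = ⊥

/-- The content `c(f)` of a polynomial: the ideal of `R` generated by its
coefficients. -/
def mvContent (f : MvPolynomial σ R) : Ideal R :=
  Ideal.span (Set.range fun m => MvPolynomial.coeff m f)

/-- The content `c(I)` of an ideal of `R[{X_α}]`: the ideal of `R` generated by the
coefficients of all polynomials in `I`. -/
def mvContentIdeal (Q : Ideal (MvPolynomial σ R)) : Ideal R :=
  Ideal.span {r | ∃ f ∈ Q, ∃ m, MvPolynomial.coeff m f = r}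

/-- `R({X_α})`: the localization of `R[{X_α}]` at the (multiplicatively closed) set of
polynomials of unit content. -/
def mvNagata (σ : Type*) : Type _ :=
  Localization (Submonoid.closure {f : MvPolynomial σ R | mvContent R f = ⊤})

instance (σ : Type*) : CommRing (mvNagata R σ) := by
  unfold mvNagata; infer_instance

/-- `R⟨{X_α}⟩`: the localization of `R[{X_α}]` at the (multiplicatively closed) set
`S = {f : c(f)_v = R}`. -/
def mvKronecker (σ : Type*) : Type _ :=
  Localization (Submonoid.closure {f : MvPolynomial σ R | vIdeal R (mvContent R f) = ⊤})

instance (σ : Type*) : CommRing (mvKronecker R σ) := by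
  unfold mvKronecker; infer_instance


/-! ### The `v`-operation through divisibility -/

/-- The condition `(c / d) x ∈ R` for all `c / d ∈ J⁻¹`, with denominators cleared. -/
theorem mem_vIdeal_iff {R : Type*} [CommRing R] [IsDomain R] {J : Ideal R} {x : R} :
    x ∈ vIdeal R J ↔ ∀ c d : R, d ≠ 0 → (∀ a ∈ J, d ∣ c * a) → d ∣ c * x := by
  have hinj := IsFractionRing.injective R (FractionRing R)
  have key : ∀ c d a : R, d ≠ 0 →
      (algebraMap R (FractionRing R) c / algebraMap R (FractionRing R) d *
        algebraMap R (FractionRing R) a ∈ (1 : Submodule R (FractionRing R)) ↔ d ∣ c * a) := by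
    intro c d a hd
    have hd' : algebraMap R (FractionRing R) d ≠ 0 := by
      simpa using hd
    rw [Submodule.mem_one]
    constructor
    · rintro ⟨y, hy⟩
      refine ⟨y, hinj ?_⟩
      rw [map_mul, map_mul, hy]
      field_simp
    · rintro ⟨y, hy⟩
      refine ⟨y, ?_⟩
      have := congrArg (algebraMap R (FractionRing R)) hy
      rw [map_mul, map_mul] at this
      rw [div_mul_eq_mul_div, this]
      field_simp
  have key2 : ∀ c d : R, d ≠ 0 →
      (algebraMap R (FractionRing R) c / algebraMap R (FractionRing R) d ∈
        (1 : Submodule R (FractionRing R)) / idealSub R J ↔ ∀ a ∈ J, d ∣ c * a) := by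
    intro c d hd
    rw [Submodule.mem_div_iff_forall_mul_mem]
    constructor
    · intro h a ha
      exact (key c d a hd).1 (h _ (Submodule.mem_map_of_mem ha))
    · rintro h _ ⟨a, ha, rfl⟩
      exact (key c d a hd).2 (h a ha)
  rw [vIdeal, Submodule.mem_comap, Submodule.mem_div_iff_forall_mul_mem]
  constructor
  · intro h c d hd hJ
    have := h _ ((key2 c d hd).2 hJ)
    rw [mul_comm] at this
    exact (key c d x hd).1 this
  · intro h y hy
    obtain ⟨c, d, hd, rfl⟩ := IsFractionRing.div_surjective (A := R) y
    have hd0 := nonZeroDivisors.ne_zero hd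
    rw [mul_comm]
    exact (key c d x hd0).2 (h c d hd0 ((key2 c d hd0).1 hy))

theorem le_vIdeal {R : Type*} [CommRing R] [IsDomain R] (J : Ideal R) : J ≤ vIdeal R J :=
  fun x hx => mem_vIdeal_iff.2 fun _ _ _ h => h x hx

theorem vIdeal_le_vIdeal {R : Type*} [CommRing R] [IsDomain R] {A B : Ideal R}
    (h : A ≤ vIdeal R B) : vIdeal R A ≤ vIdeal R B :=
  fun _ hx => mem_vIdeal_iff.2 fun c d hd hB =>
    mem_vIdeal_iff.1 hx c d hd fun _ ha => mem_vIdeal_iff.1 (h ha) c d hd hB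

theorem pow_mem_vIdeal_pow {R : Type*} [CommRing R] [IsDomain R] {J : Ideal R} {x : R}
    (hx : x ∈ vIdeal R J) (N : ℕ) : x ^ N ∈ vIdeal R (J ^ N) := by
  induction N with
  | zero => exact le_vIdeal _ (by simp)
  | succ N ih =>
    refine mem_vIdeal_iff.2 fun c d hd h => ?_
    -- First replace the last factor from `J` by `x`, then the remaining ones by `x ^ N`.
    have h1 : ∀ y ∈ J ^ N, d ∣ (c * x) * y := by
      intro y hy
      have := mem_vIdeal_iff.1 hx (c * y) d hd fun _ ha => by
        rw [mul_assoc]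
        exact h _ (by rw [pow_succ]; exact Ideal.mul_mem_mul hy ha)
      rwa [mul_right_comm] at this
    have := mem_vIdeal_iff.1 ih (c * x) d hd h1
    rwa [pow_succ', ← mul_assoc]

/-! ### Minimal primes of divisorial ideals are `t`-primes -/

/-- If `P` is minimal over `B`, then `B` localized at `P` contains a power of any finitely
generated ideal inside `P`. -/
theorem exists_mul_pow_mem {R : Type*} [CommRing R] {B P : Ideal R} (hP : P ∈ B.minimalPrimes)
    {J : Ideal R} (hJ : J.FG) (hJP : J ≤ P) :
    ∃ s ∉ P, ∃ N : ℕ, ∀ y ∈ J ^ N, s * y ∈ B := by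
  have hPp : P.IsPrime := hP.1.1
  induction J, hJ using Submodule.fg_induction with
  | singleton x =>
    have hx : x ∈ P := hJP (Submodule.mem_span_singleton_self x)
    have h1 : algebraMap R (Localization.AtPrime P) x ∈
        (B.map (algebraMap R (Localization.AtPrime P))).radical := by
      rw [IsLocalization.AtPrime.radical_map_of_mem_minimalPrimes (Localization.AtPrime P) P B hP]
      exact Ideal.mem_map_of_mem _ hx
    obtain ⟨N, hN⟩ := h1
    rw [← map_pow, IsLocalization.algebraMap_mem_map_algebraMap_iff P.primeCompl] at hN
    obtain ⟨s, hs, hsx⟩ := hN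
    refine ⟨s, hs, N, fun y hy => ?_⟩
    rw [Ideal.submodule_span_eq, Ideal.span_singleton_pow, Ideal.mem_span_singleton'] at hy
    obtain ⟨z, rfl⟩ := hy
    rw [mul_left_comm]
    exact B.mul_mem_left z hsx
  | sup J₁ J₂ _ _ ih₁ ih₂ =>
    obtain ⟨s₁, hs₁, N₁, h₁⟩ := ih₁ (le_sup_left.trans hJP)
    obtain ⟨s₂, hs₂, N₂, h₂⟩ := ih₂ (le_sup_right.trans hJP)
    refine ⟨s₁ * s₂, fun h => (hPp.mem_or_mem h).elim hs₁ hs₂, N₁ + N₂, fun y hy => ?_⟩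
    obtain ⟨y₁, hy₁, y₂, hy₂, rfl⟩ :=
      Submodule.mem_sup.1 (Ideal.sup_pow_add_le_pow_sup_pow hy)
    have e : s₁ * s₂ * (y₁ + y₂) = s₂ * (s₁ * y₁) + s₁ * (s₂ * y₂) := by ring
    rw [e]
    exact B.add_mem (B.mul_mem_left _ (h₁ _ hy₁)) (B.mul_mem_left _ (h₂ _ hy₂))

/-- A prime minimal over a divisorial ideal is closed under `J ↦ J_v` for finitely generated `J`,
that is, it is a `t`-ideal when it is nonzero. -/
theorem vIdeal_le_of_mem_minimalPrimes {R : Type*} [CommRing R] [IsDomain R] {A P : Ideal R}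
    (hP : P ∈ (vIdeal R A).minimalPrimes) {J : Ideal R} (hJ : J.FG) (hJP : J ≤ P) :
    vIdeal R J ≤ P := by
  intro x hx
  have hPp : P.IsPrime := hP.1.1
  obtain ⟨s, hs, N, h⟩ := exists_mul_pow_mem hP hJ hJP
  have h1 : s * x ^ N ∈ vIdeal R A := by
    refine mem_vIdeal_iff.2 fun c d hd hA => ?_
    rw [← mul_assoc]
    refine mem_vIdeal_iff.1 (pow_mem_vIdeal_pow hx N) (c * s) d hd fun y hy => ?_
    rw [mul_assoc]
    exact mem_vIdeal_iff.1 (h y hy) c d hd hA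
  exact hPp.mem_of_pow_mem N ((hPp.mem_or_mem (hP.1.2 h1)).resolve_left hs)

/-! ### Ideals with proper `t`-closure and maximal `t`-ideals -/

/-- `L_t ≠ R`: no nonzero finitely generated subideal `J` of `L` satisfies `J_v = R`. -/
def TProper {R : Type*} [CommRing R] (L : Ideal R) : Prop :=
  ∀ J : Ideal R, J.FG → J ≠ ⊥ → J ≤ L → 1 ∉ vIdeal R J

theorem TProper.mono {R : Type*} [CommRing R] {L L' : Ideal R} (h : TProper L') (hL : L ≤ L') :
    TProper L :=
  fun J hJ hJ0 hJL => h J hJ hJ0 (hJL.trans hL)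

theorem tProper_of_mem_minimalPrimes {R : Type*} [CommRing R] [IsDomain R] {A P : Ideal R}
    (hP : P ∈ (vIdeal R A).minimalPrimes) : TProper P :=
  fun _ hJ _ hJP h1 =>
    hP.1.1.ne_top ((Ideal.eq_top_iff_one _).2 (vIdeal_le_of_mem_minimalPrimes hP hJ hJP h1))

theorem exists_fg_of_le_sup {R : Type*} [CommRing R] {A B J : Ideal R} (hJ : J.FG)
    (h : J ≤ A ⊔ B) :
    ∃ A' B' : Ideal R, A'.FG ∧ B'.FG ∧ A' ≤ A ∧ B' ≤ B ∧ J ≤ A' ⊔ B' := by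
  induction J, hJ using Submodule.fg_induction with
  | singleton x =>
    obtain ⟨y, hy, z, hz, hyz⟩ :=
      Submodule.mem_sup.1 (h (Submodule.mem_span_singleton_self x))
    refine ⟨Ideal.span {y}, Ideal.span {z}, Submodule.fg_span_singleton y,
      Submodule.fg_span_singleton z, ?_, ?_, ?_⟩
    · simpa [Ideal.span_le] using hy
    · simpa [Ideal.span_le] using hz
    · rw [Ideal.submodule_span_eq, Ideal.span_le, Set.singleton_subset_iff, ← hyz]
      exact Submodule.add_mem_sup (Ideal.mem_span_singleton_self y)
        (Ideal.mem_span_singleton_self z)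
  | sup J₁ J₂ _ _ ih₁ ih₂ =>
    obtain ⟨A₁, B₁, hA₁, hB₁, a₁, b₁, h₁⟩ := ih₁ (le_sup_left.trans h)
    obtain ⟨A₂, B₂, hA₂, hB₂, a₂, b₂, h₂⟩ := ih₂ (le_sup_right.trans h)
    refine ⟨A₁ ⊔ A₂, B₁ ⊔ B₂, Submodule.FG.sup hA₁ hA₂, Submodule.FG.sup hB₁ hB₂, sup_le a₁ a₂, sup_le b₁ b₂, ?_⟩
    rw [sup_sup_sup_comm]
    exact sup_le_sup h₁ h₂

/-- An ideal maximal with respect to having proper `t`-closure is closed under `J ↦ J_v`. -/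
theorem vIdeal_le_of_maximal {R : Type*} [CommRing R] [IsDomain R] {M : Ideal R}
    (hM : Maximal (fun L : Ideal R => TProper L) M) {J : Ideal R} (hJ : J.FG) (hJ0 : J ≠ ⊥)
    (hJM : J ≤ M) : vIdeal R J ≤ M := by
  intro x hx
  have hT : TProper (M ⊔ Ideal.span {x}) := by
    intro J' hJ' _ hJ'M h1
    obtain ⟨A, B, hA, -, hAM, hBx, hle⟩ := exists_fg_of_le_sup hJ' hJ'M
    refine hM.prop (A ⊔ J) (Submodule.FG.sup hA hJ) (fun h => hJ0 ?_) (sup_le hAM hJM) ?_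
    · exact le_bot_iff.1 (h ▸ le_sup_right)
    · have hJle : vIdeal R J ≤ vIdeal R (A ⊔ J) :=
        vIdeal_le_vIdeal (le_sup_right.trans (le_vIdeal _))
      refine vIdeal_le_vIdeal (hle.trans (sup_le (le_sup_left.trans (le_vIdeal _)) ?_)) h1
      refine hBx.trans ?_
      rw [Ideal.span_le, Set.singleton_subset_iff]
      exact hJle hx
  exact hM.le_of_ge hT le_sup_left (Ideal.mem_sup_right (Ideal.mem_span_singleton_self x))

theorem mem_tMax_of_maximal {R : Type*} [CommRing R] [IsDomain R] {M : Ideal R}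
    (hM : Maximal (fun L : Ideal R => TProper L) M) (hM0 : M ≠ ⊥) : M ∈ tMax R := by
  refine ⟨⟨hM0, le_antisymm ?_ ?_⟩, ?_, ?_⟩
  · exact iSup_le fun J => iSup_le fun hJ => iSup_le fun hJ0 => iSup_le fun hJM =>
      vIdeal_le_of_maximal hM hJ hJ0 hJM
  · intro x hx
    by_cases hx0 : x = 0
    · rw [hx0]; exact Ideal.zero_mem _
    · have hle : vIdeal R (Ideal.span {x}) ≤ tIdeal R M :=
        le_iSup_of_le (Ideal.span {x}) <| le_iSup_of_le (Submodule.fg_span_singleton x) <|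
          le_iSup_of_le (by simpa using hx0) <|
          le_iSup_of_le (by simpa [Ideal.span_le] using hx) le_rfl
      exact hle (le_vIdeal _ (Ideal.mem_span_singleton_self x))
  · rintro rfl
    exact hM.prop ⊤ (Ideal.fg_top R) hM0 le_rfl (le_vIdeal _ Submodule.mem_top)
  · intro N hN hN1 hMN
    refine le_antisymm (hM.le_of_ge (fun J hJ hJ0 hJN h1 => hN1 ?_) hMN) hMN
    rw [Ideal.eq_top_iff_one, ← hN.2]
    have hle : vIdeal R J ≤ tIdeal R N :=
      le_iSup_of_le J <| le_iSup_of_le hJ <| le_iSup_of_le hJ0 <| le_iSup_of_le hJN le_rfl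
    exact hle h1

theorem TProper.exists_le_tMax {R : Type*} [CommRing R] [IsDomain R] {L : Ideal R}
    (hL : TProper L) (hL0 : L ≠ ⊥) : ∃ M ∈ tMax R, L ≤ M := by
  obtain ⟨M, hLM, hM⟩ := zorn_le_nonempty₀ {L : Ideal R | TProper L} (by
    intro c hc hchain y hy
    refine ⟨sSup c, fun J hJ hJ0 hJc h1 => ?_, fun z hz => le_sSup hz⟩
    obtain ⟨K, hK, hJK⟩ := (CompleteLattice.isCompactElement_iff_le_of_directed_sSup_le _ _).1
      ((Submodule.fg_iff_compact J).1 hJ) c ⟨y, hy⟩ hchain.directedOn hJc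
    exact hc hK J hJ hJ0 hJK h1) L hL
  exact ⟨M, mem_tMax_of_maximal hM (fun h => hL0 (le_bot_iff.1 (h ▸ hLM))), hLM⟩

/-! ### Divisibility and `t`-primes in a PVMD -/

/-- In a PVMD, divisibility is total up to a factor outside a nonzero ideal with proper
`t`-closure. -/
theorem TProper.exists_dvd {R : Type*} [CommRing R] [IsDomain R] (hR : IsPVMD R) {L : Ideal R}
    (hL : TProper L) (hL0 : L ≠ ⊥) (a b : R) : ∃ s ∉ L, a ∣ s * b ∨ b ∣ s * a := by
  obtain ⟨M, hM, hLM⟩ := hL.exists_le_tMax hL0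
  have h1 : (1 : R) ∉ L := fun h => hM.2.1 ((Ideal.eq_top_iff_one _).2 (hLM h))
  by_cases ha : a = 0
  · exact ⟨1, h1, Or.inr (by simp [ha])⟩
  by_cases hb : b = 0
  · exact ⟨1, h1, Or.inl (by simp [hb])⟩
  have hinj := IsFractionRing.injective R (FractionRing R)
  have ha' : algebraMap R (FractionRing R) a ≠ 0 := by simpa using ha
  have hb' : algebraMap R (FractionRing R) b ≠ 0 := by simpa using hb
  rcases hR M hM (algebraMap R (FractionRing R) a / algebraMap R (FractionRing R) b)
    (div_ne_zero ha' hb') with ⟨r, s, hs, h⟩ | ⟨r, s, hs, h⟩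
  · refine ⟨s, fun h' => hs (hLM h'), Or.inr ⟨r, hinj ?_⟩⟩
    rw [map_mul, map_mul, ← h]
    field_simp
  · refine ⟨s, fun h' => hs (hLM h'), Or.inl ⟨r, hinj ?_⟩⟩
    rw [map_mul, map_mul, ← h]
    field_simp

/-- In a PVMD, primes with `(P + Q)_t ≠ R`, which thus lie in a common maximal `t`-ideal unless
both are zero, are comparable. -/
theorem le_or_le_of_tProper_sup {R : Type*} [CommRing R] [IsDomain R] (hR : IsPVMD R)
    {P Q : Ideal R} (hP : P.IsPrime) (hQ : Q.IsPrime) (h : TProper (P ⊔ Q)) :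
    P ≤ Q ∨ Q ≤ P := by
  by_contra! hne
  obtain ⟨x, hxP, hxQ⟩ := SetLike.not_le_iff_exists.1 hne.1
  obtain ⟨y, hyQ, hyP⟩ := SetLike.not_le_iff_exists.1 hne.2
  have h0 : P ⊔ Q ≠ ⊥ := fun h0 => hxQ (by
    have hx : x ∈ P ⊔ Q := Ideal.mem_sup_left hxP
    rw [h0, Ideal.mem_bot] at hx
    rw [hx]; exact Q.zero_mem)
  obtain ⟨s, hs, hd | hd⟩ := h.exists_dvd hR h0 x y
  · exact (hP.mem_or_mem (P.mem_of_dvd hd hxP)).elim (fun h => hs (Ideal.mem_sup_left h)) hyP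
  · exact (hQ.mem_or_mem (Q.mem_of_dvd hd hyQ)).elim (fun h => hs (Ideal.mem_sup_right h)) hxQ

/-- A finitely generated ideal of a PVMD is principal locally at a `t`-prime `P`, generated by
one of its given generators. -/
theorem exists_dvd_all {R : Type*} [CommRing R] [IsDomain R] (hR : IsPVMD R) {P : Ideal R}
    (hP : P.IsPrime) (hPT : TProper P) (hP0 : P ≠ ⊥) {ι : Type*} (a : ι → R) {t : Finset ι}
    (ht : t.Nonempty) : ∃ i ∈ t, ∃ s ∉ P, ∀ j ∈ t, a i ∣ s * a j := by
  classical
  induction ht using Finset.Nonempty.cons_induction with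
  | singleton i =>
    refine ⟨i, by simp, 1, fun h => hP.ne_top ((Ideal.eq_top_iff_one _).2 h), ?_⟩
    simp
  | cons k t hk ht ih =>
    obtain ⟨i, hi, s, hs, h⟩ := ih
    obtain ⟨u, hu, hd | hd⟩ := hPT.exists_dvd hR hP0 (a i) (a k)
    · refine ⟨i, by simp [hi], u * s, fun h => (hP.mem_or_mem h).elim hu hs, fun j hj => ?_⟩
      rcases Finset.mem_cons.1 hj with rfl | hj
      · rw [mul_right_comm]; exact hd.mul_right s
      · rw [mul_assoc]; exact (h j hj).mul_left u
    · refine ⟨k, by simp, u * s, fun h => (hP.mem_or_mem h).elim hu hs, fun j hj => ?_⟩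
      rcases Finset.mem_cons.1 hj with rfl | hj
      · exact dvd_mul_left _ _
      · obtain ⟨z, hz⟩ := h j hj
        rw [mul_assoc, hz, ← mul_assoc]
        exact hd.mul_right z

/-! ### Minimal primes of `I_v` -/

/-- **Lemma (2.15).**  Let `I = (a₁, …, aₙ)` be a nonzero finitely generated ideal of a
PVMD `R`.  Then each prime minimal over `I_v` is minimal over some `(aᵢ)`; moreover, if
`I_v` has only finitely many minimal primes, then each minimal prime of `I_v` is the
radical of a `v`-finite divisorial ideal. -/
theorem pvmd_minimal_primes_of_v_ideal (R : Type*) [CommRing R] [IsDomain R]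
    (hR : IsPVMD R) (n : ℕ) (a : Fin n → R) (I : Ideal R)
    (hI : I = Ideal.span (Set.range a)) (hI0 : I ≠ ⊥) :
    (∀ P ∈ (vIdeal R I).minimalPrimes, ∃ i : Fin n,
      P ∈ (Ideal.span {a i} : Ideal R).minimalPrimes) ∧
    ((vIdeal R I).minimalPrimes.Finite →
      ∀ P ∈ (vIdeal R I).minimalPrimes, ∃ J : Ideal R, J.FG ∧ P = (vIdeal R J).radical) := by
  have hIle : ∀ P ∈ (vIdeal R I).minimalPrimes, I ≤ P := fun P hP => (le_vIdeal I).trans hP.1.2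
  have hIfg : I.FG := hI ▸ Submodule.fg_span (Set.finite_range a)
  have haI : ∀ i, a i ∈ I := fun i => hI ▸ Ideal.subset_span (Set.mem_range_self i)
  constructor
  · intro P hP
    have hPp : P.IsPrime := hP.1.1
    have hP0 : P ≠ ⊥ := fun h => hI0 (le_bot_iff.1 (h ▸ hIle P hP))
    obtain ⟨k, hk⟩ : ∃ k, a k ≠ 0 := by
      by_contra! h
      refine hI0 (hI.trans (Ideal.span_eq_bot.2 ?_))
      rintro _ ⟨i, rfl⟩
      exact h i
    obtain ⟨i, -, s, hs, h⟩ := exists_dvd_all hR hPp (tProper_of_mem_minimalPrimes hP) hP0 a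
      (t := Finset.univ) ⟨k, Finset.mem_univ k⟩
    have hai : a i ≠ 0 := by
      intro h0
      have h1 := h k (Finset.mem_univ k)
      rw [h0, zero_dvd_iff] at h1
      rcases mul_eq_zero.1 h1 with h2 | h2
      · exact hs (h2 ▸ P.zero_mem)
      · exact hk h2
    -- `s / a i ∈ I⁻¹`
    have hI' : ∀ x ∈ I, a i ∣ s * x := by
      intro x hx
      rw [hI] at hx
      induction hx using Submodule.span_induction with
      | mem x hx => obtain ⟨j, rfl⟩ := hx; exact h j (Finset.mem_univ j)
      | zero => simp
      | add x y _ _ hx hy => rw [mul_add]; exact dvd_add hx hy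
      | smul r x _ hx => rw [smul_eq_mul, mul_left_comm]; exact hx.mul_left r
    refine ⟨i, ⟨⟨hPp, ?_⟩, ?_⟩⟩
    · rw [Ideal.span_le, Set.singleton_subset_iff]
      exact hIle P hP (haI i)
    · rintro Q ⟨hQp, hQ⟩ hQP
      refine hP.2 ⟨hQp, fun x hx => ?_⟩ hQP
      have hx' : a i ∣ s * x := mem_vIdeal_iff.1 hx s (a i) hai hI'
      exact (hQp.mem_or_mem (Q.mem_of_dvd hx' (hQ (Ideal.mem_span_singleton_self _)))).resolve_left
        fun h' => hs (hQP h')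
  · intro hfin P hP
    have hPp : P.IsPrime := hP.1.1
    -- The case `Q = P` is included, with `A = ⊥`, so that the index type below is all of
    -- `minimalPrimes`.
    have hsep : ∀ Q : (vIdeal R I).minimalPrimes, ∃ A : Ideal R, A.FG ∧ A ≤ P ∧
        (Q.1 ≠ P → ∃ B : Ideal R, B.FG ∧ B ≤ Q.1 ∧ 1 ∈ vIdeal R (A ⊔ B)) := by
      rintro ⟨Q, hQ⟩
      by_cases hQP : Q = P
      · exact ⟨⊥, Submodule.fg_bot, bot_le, fun h => absurd hQP h⟩
      have hnT : ¬ TProper (P ⊔ Q) := by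
        intro hT
        rcases le_or_le_of_tProper_sup hR hPp hQ.1.1 hT with h | h
        · exact hQP (le_antisymm (hQ.2 hP.1 h) h)
        · exact hQP (le_antisymm h (hP.2 hQ.1 h))
      rw [TProper] at hnT
      push Not at hnT
      obtain ⟨J, hJ, -, hJle, h1⟩ := hnT
      obtain ⟨A, B, hA, hB, hAP, hBQ, hle⟩ := exists_fg_of_le_sup hJ hJle
      exact ⟨A, hA, hAP, fun _ => ⟨B, hB, hBQ, vIdeal_le_vIdeal (hle.trans (le_vIdeal _)) h1⟩⟩
    choose A hAfg hAP hAB using hsep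
    have : Finite (vIdeal R I).minimalPrimes := hfin
    have hJfg : (I ⊔ ⨆ Q, A Q).FG := Submodule.FG.sup hIfg (Submodule.fg_iSup A hAfg)
    have hJP : I ⊔ ⨆ Q, A Q ≤ P := sup_le (hIle P hP) (iSup_le hAP)
    refine ⟨I ⊔ ⨆ Q, A Q, hJfg, le_antisymm ?_ ?_⟩
    · rw [← Ideal.sInf_minimalPrimes]
      refine le_sInf fun N hN => ?_
      have hNp : N.IsPrime := hN.1.1
      have hJN : I ⊔ ⨆ Q, A Q ≤ N := (le_vIdeal _).trans hN.1.2
      have hIN : vIdeal R I ≤ N :=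
        (vIdeal_le_vIdeal (le_sup_left.trans (le_vIdeal _))).trans hN.1.2
      obtain ⟨Q, hQ, hQN⟩ := Ideal.exists_minimalPrimes_le hIN
      by_cases hQP : Q = P
      · exact hQP ▸ hQN
      obtain ⟨B, hB, hBQ, h1⟩ := hAB ⟨Q, hQ⟩ hQP
      have hle : A ⟨Q, hQ⟩ ⊔ B ≤ N :=
        sup_le ((le_iSup A ⟨Q, hQ⟩).trans (le_sup_right.trans hJN)) (hBQ.trans hQN)
      exact absurd ((Ideal.eq_top_iff_one _).2
        (vIdeal_le_of_mem_minimalPrimes hN (Submodule.FG.sup (hAfg _) hB) hle h1)) hNp.ne_top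
    · rw [hPp.radical_le_iff]
      exact vIdeal_le_of_mem_minimalPrimes hP hJfg hJP

end TSharpPaper
end
end

section
/- A Prüfer v-multiplication domain R is a Generalized Krull domain if and only if each t-linked overring of R is a t#-domain and P ≠ (P²)_t for each t-prime P of R. -/
/-!
All `v`- and `t`-notions are first rewritten as divisibility statements inside the ring
(`mem_vIdeal`, `frac_mem_locSet`), so that they apply verbatim both to `R` and to its overrings.
In a PVMD a nonzero prime contained in a maximal `t`-ideal is a `t`-prime, and finitely generated
ideals are locally principal at such primes (`exists_local_generator`).

Suppose every `t`-localizing system is `v`-finite. If `P = (P²)_t`, the `t`-ideals containing `P`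
form a `t`-localizing system; hence `P` is `v`-finite and locally principal at `P`, contradicting
`P = (P²)_t` (`ne_tIdeal_sq`). If `T` is a `t`-linked overring, each maximal `t`-ideal `N` of `T`
contracts to a `t`-prime of `R` with `T_N = R_{N ∩ R}` (`tMax_comap`). Given a set `S` of
maximal `t`-ideals of `T` not containing `N`, the `t`-ideals of `R` contained in no `M ∩ R`,
`M ∈ S`, form a `t`-localizing system having `N ∩ R` as a member. It thus contains some
`F_v ⊆ N ∩ R` with `F` finitely generated. If `a` generates `F` at `N ∩ R`, some fraction `s / a`
lies in `F⁻¹ ⊆ ⋂_{M ∈ S} T_M` but not in `T_N` (`exists_not_mem_locSet`).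

Conversely, let `P` be a `t`-prime. The `t#`-property of the `t`-linked overring
`R_P ∩ ⋂_{M ⊉ P} R_M` gives a fraction `c / d ∈ ⋂_{M ⊉ P} R_M` outside `R_P`
(`exists_separating_fraction`). Its conductor is essentially finitely generated, because
`(c, d)` is `t`-invertible (`exists_fg_conductor`), so there is a finitely generated `F ⊆ P`
contained in no maximal `t`-ideal `M ⊉ P`. Adjoining an element of `P ∖ (P²)_t` yields a finitely
generated `G ⊆ P` with `(P²)_t ⊆ G_v` (`exists_fg_tIdeal_sq_le`). If now some member of a
`t`-localizing system `Φ` contained no `v`-finite member of `Φ`, a maximal `t`-ideal `P` above it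
with this property would be a `t`-prime in `Φ` (`isPrime_of_maximal`); then `(P²)_t ∈ Φ`, hence
`G_v ∈ Φ` with `G_v ⊆ P`, a contradiction.
-/

/-
Definitions following S. Gabelli, E. Houston, T. G. Lucas,
"The t#-property for integral domains".

All the star-operation notions (`v`, `t`, maximal `t`-ideals, etc.) are defined for a
commutative ring `R` via its total quotient field `FractionRing R`; in all theorems `R`
is assumed to be an integral domain, so `FractionRing R` is its quotient field `K`.
-/

noncomputable section

namespace TSharpPaper

variable (R : Type*) [CommRing R]

variable {σ : Type*}

/-! ### The `v`- and `t`-operations in terms of divisibility -/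

section Basic

set_option linter.unusedSectionVars false

variable {A : Type*} [CommRing A] [IsDomain A]

lemma mem_inv_iff (I : Ideal A) (x : FractionRing A) :
    x ∈ (1 : Submodule A (FractionRing A)) / idealSub A I ↔
      ∀ a ∈ I, x * algebraMap A (FractionRing A) a ∈ imageR A := by
  rw [Submodule.mem_div_iff_forall_mul_mem]
  constructor
  · intro h a ha
    obtain ⟨y, hy⟩ := Submodule.mem_one.1 (h _ (Submodule.mem_map_of_mem ha))
    exact ⟨y, hy⟩
  · rintro h _ ⟨a, ha, rfl⟩
    obtain ⟨y, hy⟩ := h a ha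
    exact Submodule.mem_one.2 ⟨y, hy⟩

lemma frac_mul_mem_iff {c d a : A} (hd : d ≠ 0) :
    (algebraMap A (FractionRing A) c / algebraMap A (FractionRing A) d) *
      algebraMap A (FractionRing A) a ∈ imageR A ↔ d ∣ c * a := by
  have hd' : algebraMap A (FractionRing A) d ≠ 0 := by simpa using hd
  have inj := IsFractionRing.injective A (FractionRing A)
  constructor
  · rintro ⟨y, hy⟩
    refine ⟨y, inj ?_⟩
    rw [map_mul, map_mul, hy]; field_simp
  · rintro ⟨y, hy⟩
    refine ⟨y, ?_⟩
    have := congrArg (algebraMap A (FractionRing A)) hy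
    rw [map_mul, map_mul] at this
    field_simp
    rw [this]; ring

/-- Writing elements of the quotient field as `c / d` turns membership in `I_v` into a
divisibility condition inside the ring. -/
lemma mem_vIdeal {I : Ideal A} {r : A} :
    r ∈ vIdeal A I ↔ ∀ c d : A, d ≠ 0 → (∀ a ∈ I, d ∣ c * a) → d ∣ c * r := by
  unfold vIdeal
  rw [Submodule.mem_comap, Submodule.mem_div_iff_forall_mul_mem]
  constructor
  · intro h c d hd hI
    rw [← frac_mul_mem_iff hd]
    obtain ⟨y, hy⟩ := Submodule.mem_one.1 (h (algebraMap A (FractionRing A) c / algebraMap A _ d)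
      ((mem_inv_iff I _).2 fun a ha => (frac_mul_mem_iff hd).2 (hI a ha)))
    refine ⟨y, hy.trans ?_⟩
    rw [Algebra.linearMap_apply, mul_comm]
  · intro h x hx
    rw [mem_inv_iff] at hx
    obtain ⟨c, d, hd, rfl⟩ := IsFractionRing.div_surjective (A := A) x
    have hd : d ≠ 0 := nonZeroDivisors.ne_zero hd
    obtain ⟨y, hy⟩ := (frac_mul_mem_iff hd).2
      (h c d hd fun a ha => (frac_mul_mem_iff hd).1 (hx a ha))
    refine Submodule.mem_one.2 ⟨y, hy.trans ?_⟩
    rw [Algebra.linearMap_apply, mul_comm]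

/-- `I⁻¹ = A` exactly when `I_v = A`. -/
lemma inv_eq_one_iff {I : Ideal A} :
    (1 : Submodule A (FractionRing A)) / idealSub A I = 1 ↔ (1 : A) ∈ vIdeal A I := by
  rw [mem_vIdeal]
  constructor
  · intro h c d hd hI
    rw [← frac_mul_mem_iff hd]
    have := (mem_inv_iff I _).2 fun a ha => (frac_mul_mem_iff hd).2 (hI a ha)
    rw [h] at this
    obtain ⟨y, hy⟩ := Submodule.mem_one.1 this
    exact ⟨y, by rw [hy]; simp⟩
  · intro h
    apply le_antisymm
    · intro x hx
      rw [mem_inv_iff] at hx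
      obtain ⟨c, d, hd, rfl⟩ := IsFractionRing.div_surjective (A := A) x
      have hd : d ≠ 0 := nonZeroDivisors.ne_zero hd
      obtain ⟨y, hy⟩ := (frac_mul_mem_iff hd).2
        (h c d hd fun a ha => (frac_mul_mem_iff hd).1 (hx a ha))
      exact Submodule.mem_one.2 ⟨y, by rw [hy]; simp⟩
    · intro x hx
      obtain ⟨y, rfl⟩ := Submodule.mem_one.1 hx
      rw [mem_inv_iff]
      intro a _
      exact ⟨y * a, by simp⟩

lemma frac_mem_locSet {M : Ideal A} {c d : A} (hd : d ≠ 0) :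
    algebraMap A (FractionRing A) c / algebraMap A (FractionRing A) d ∈ locSet A M ↔
      ∃ s, s ∉ M ∧ d ∣ c * s := by
  constructor
  · rintro ⟨r, s, hs, h⟩
    exact ⟨s, hs, (frac_mul_mem_iff hd).1 ⟨r, h.symm⟩⟩
  · rintro ⟨s, hs, h⟩
    obtain ⟨r, hr⟩ := (frac_mul_mem_iff hd).2 h
    exact ⟨r, s, hs, hr.symm⟩

lemma le_vIdeal_s13 (I : Ideal A) : I ≤ vIdeal A I := fun _ hr =>
  mem_vIdeal.2 fun _ _ _ h => h _ hr

lemma vIdeal_le_of_le {I J : Ideal A} (h : I ≤ vIdeal A J) : vIdeal A I ≤ vIdeal A J := by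
  intro r hr
  rw [mem_vIdeal] at hr ⊢
  exact fun c d hd hJ => hr c d hd fun a ha => mem_vIdeal.1 (h ha) c d hd hJ

lemma vIdeal_mono {I J : Ideal A} (h : I ≤ J) : vIdeal A I ≤ vIdeal A J :=
  vIdeal_le_of_le (h.trans (le_vIdeal_s13 J))

lemma mem_tIdeal {I : Ideal A} (hI : I ≠ ⊥) {r : A} :
    r ∈ tIdeal A I ↔ ∃ J : Ideal A, J.FG ∧ J ≠ ⊥ ∧ J ≤ I ∧ r ∈ vIdeal A J := by
  constructor
  · intro h
    unfold tIdeal at h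
    obtain ⟨x, hx, hx0⟩ := Submodule.exists_mem_ne_zero_of_ne_bot hI
    let U : Ideal A :=
      { carrier := {r | ∃ J : Ideal A, J.FG ∧ J ≠ ⊥ ∧ J ≤ I ∧ r ∈ vIdeal A J}
        zero_mem' := ⟨Ideal.span {x}, ⟨{x}, by simp⟩, by simpa using hx0,
          by simpa [Ideal.span_le] using hx, zero_mem _⟩
        add_mem' := by
          rintro a b ⟨J, h1, h2, h3, h4⟩ ⟨J', h1', h2', h3', h4'⟩
          exact ⟨J ⊔ J', Submodule.FG.sup h1 h1', fun e => h2 (sup_eq_bot_iff.1 e).1, sup_le h3 h3',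
            add_mem (vIdeal_mono le_sup_left h4) (vIdeal_mono le_sup_right h4')⟩
        smul_mem' := by
          rintro a b ⟨J, h1, h2, h3, h4⟩
          exact ⟨J, h1, h2, h3, Ideal.mul_mem_left _ _ h4⟩ }
    have : tIdeal A I ≤ U := by
      unfold tIdeal
      exact iSup_le fun J => iSup_le fun h1 => iSup_le fun h2 => iSup_le fun h3 r hr =>
        ⟨J, h1, h2, h3, hr⟩
    exact this h
  · rintro ⟨J, h1, h2, h3, h4⟩
    unfold tIdeal
    have : vIdeal A J ≤ ⨆ (J : Ideal A) (_ : J.FG) (_ : J ≠ ⊥) (_ : J ≤ I), vIdeal A J :=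
      le_iSup_of_le J (le_iSup_of_le h1 (le_iSup_of_le h2 (le_iSup_of_le h3 le_rfl)))
    exact this h4

lemma isTIdeal_iff {I : Ideal A} : IsTIdeal A I ↔
    I ≠ ⊥ ∧ ∀ J : Ideal A, J.FG → J ≠ ⊥ → J ≤ I → vIdeal A J ≤ I := by
  constructor
  · rintro ⟨h0, h⟩
    refine ⟨h0, fun J h1 h2 h3 r hr => ?_⟩
    rw [← h]
    exact (mem_tIdeal h0).2 ⟨J, h1, h2, h3, hr⟩
  · rintro ⟨h0, h⟩
    refine ⟨h0, le_antisymm ?_ ?_⟩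
    · intro r hr
      obtain ⟨J, h1, h2, h3, h4⟩ := (mem_tIdeal h0).1 hr
      exact h J h1 h2 h3 h4
    · intro r hr
      obtain ⟨x, hx, hx0⟩ := Submodule.exists_mem_ne_zero_of_ne_bot h0
      refine (mem_tIdeal h0).2 ⟨Ideal.span {r, x}, Submodule.fg_span (by simp), ?_, ?_, ?_⟩
      · intro e
        rw [Ideal.span_eq_bot] at e
        exact hx0 (e x (by simp))
      · rw [Ideal.span_le]
        rintro y (rfl | rfl) <;> assumption
      · exact le_vIdeal_s13 _ (Ideal.subset_span (by simp))

lemma le_tIdeal {I : Ideal A} : I ≤ tIdeal A I := by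
  intro r hr
  by_cases hr0 : r = 0
  · rw [hr0]; exact zero_mem _
  have hI : I ≠ ⊥ := fun e => hr0 (by simpa [e] using hr)
  exact (mem_tIdeal hI).2 ⟨Ideal.span {r}, ⟨{r}, by simp⟩, by simpa using hr0,
    by simpa [Ideal.span_le] using hr, le_vIdeal_s13 _ (Ideal.subset_span rfl)⟩

lemma tIdeal_le {I J : Ideal A} (h : I ≤ J) (hJ : IsTIdeal A J) : tIdeal A I ≤ J := by
  unfold tIdeal
  exact iSup_le fun F => iSup_le fun h1 => iSup_le fun h2 => iSup_le fun h3 =>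
    (isTIdeal_iff.1 hJ).2 F h1 h2 (h3.trans h)

/-- A finitely generated subideal of the directed union `I_t` already lies in one `J_v`. -/
lemma exists_fg_le_vIdeal {I : Ideal A} (hI : I ≠ ⊥) {F : Ideal A} (hF : F.FG)
    (h : F ≤ tIdeal A I) :
    ∃ J : Ideal A, J.FG ∧ J ≠ ⊥ ∧ J ≤ I ∧ F ≤ vIdeal A J := by
  induction F, hF using Submodule.fg_induction with
  | singleton x =>
    obtain ⟨J, h1, h2, h3, h4⟩ := (mem_tIdeal hI).1 (h (Submodule.mem_span_singleton_self x))
    exact ⟨J, h1, h2, h3, by simpa [Submodule.span_le] using h4⟩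
  | sup M₁ M₂ hM₁ hM₂ ih₁ ih₂ =>
    obtain ⟨J, h1, h2, h3, h4⟩ := ih₁ (le_sup_left.trans h)
    obtain ⟨J', h1', h2', h3', h4'⟩ := ih₂ (le_sup_right.trans h)
    exact ⟨J ⊔ J', Submodule.FG.sup h1 h1', fun e => h2 (sup_eq_bot_iff.1 e).1, sup_le h3 h3',
      sup_le (h4.trans (vIdeal_mono le_sup_left)) (h4'.trans (vIdeal_mono le_sup_right))⟩

lemma isTIdeal_tIdeal {I : Ideal A} (hI : I ≠ ⊥) : IsTIdeal A (tIdeal A I) := by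
  rw [isTIdeal_iff]
  refine ⟨fun e => hI (le_bot_iff.1 (e ▸ le_tIdeal)), fun F h1 _ h3 r hr => ?_⟩
  obtain ⟨J, k1, k2, k3, k4⟩ := exists_fg_le_vIdeal hI h1 h3
  exact (mem_tIdeal hI).2 ⟨J, k1, k2, k3, vIdeal_le_of_le k4 hr⟩

lemma isTIdeal_vIdeal {I : Ideal A} (hI : I ≠ ⊥) : IsTIdeal A (vIdeal A I) :=
  isTIdeal_iff.2 ⟨fun e => hI (le_bot_iff.1 (e ▸ le_vIdeal_s13 I)),
    fun _ _ _ h => vIdeal_le_of_le h⟩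

lemma isTIdeal_top : IsTIdeal A (⊤ : Ideal A) :=
  isTIdeal_iff.2 ⟨top_ne_bot, fun _ _ _ _ => le_top⟩

lemma mul_mem_vIdeal {F G : Ideal A} {x y : A} (hx : x ∈ vIdeal A F) (hy : y ∈ vIdeal A G) :
    x * y ∈ vIdeal A (F * G) := by
  rw [mem_vIdeal] at *
  intro c d hd h
  rw [← mul_assoc]
  refine hy (c * x) d hd fun g hg => ?_
  rw [mul_right_comm]
  refine hx (c * g) d hd fun f hf => ?_
  rw [mul_assoc, mul_comm g f]
  exact h _ (Ideal.mul_mem_mul hf hg)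

/-- In a field `⊥_v` is the whole ring; this is the only way in which the zero ideal can
produce a `v`-finite `t`-ideal. -/
lemma IsVFinite.exists_ne_bot {J : Ideal A} (h : IsVFinite A J) (hJ : J ≠ ⊥) :
    ∃ F : Ideal A, F.FG ∧ F ≠ ⊥ ∧ J = vIdeal A F := by
  obtain ⟨F, hF, rfl⟩ := h
  by_cases hF0 : F = ⊥
  · subst hF0
    obtain ⟨r, hr, hr0⟩ := Submodule.exists_mem_ne_zero_of_ne_bot hJ
    refine ⟨⊤, ⟨{1}, by simp⟩, top_ne_bot, ?_⟩
    obtain ⟨k, hk⟩ := mem_vIdeal.1 hr 1 (r * r) (mul_ne_zero hr0 hr0) (by simp)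
    have : IsUnit r := IsUnit.of_mul_eq_one k (mul_left_cancel₀ hr0 (by rw [← mul_assoc, ← hk]; ring))
    rw [Ideal.eq_top_of_isUnit_mem _ hr this,
      Ideal.eq_top_of_isUnit_mem _ (le_vIdeal_s13 _ Submodule.mem_top) isUnit_one]
  · exact ⟨F, hF, hF0, rfl⟩

/-- The conductor `(J : a) = {r | ra ∈ J}` as an ideal. -/
def cond (J : Ideal A) (a : A) : Ideal A := Submodule.comap (LinearMap.mulRight A a) J

lemma mem_cond {J : Ideal A} {a r : A} : r ∈ cond J a ↔ r * a ∈ J := Iff.rfl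

lemma colon_span_eq (J : Ideal A) (a : A) :
    Submodule.colon J (Ideal.span {a} : Ideal A) = cond J a := by
  ext r
  rw [mem_cond]
  simp [Submodule.mem_colon]

lemma isTIdeal_cond {J : Ideal A} (hJ : IsTIdeal A J) (a : A) : IsTIdeal A (cond J a) := by
  have hle : J ≤ cond J a := fun r hr => Ideal.mul_mem_right _ _ hr
  rw [isTIdeal_iff]
  refine ⟨fun e => hJ.1 (le_bot_iff.1 (e ▸ hle)), fun F h1 h2 h3 r hr => ?_⟩
  by_cases ha : a = 0
  · rw [mem_cond, ha, mul_zero]; exact zero_mem _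
  · refine (isTIdeal_iff.1 hJ).2 (F * Ideal.span {a}) (h1.mul ⟨{a}, by simp⟩) ?_ ?_
      (mul_mem_vIdeal hr (le_vIdeal_s13 _ (Ideal.subset_span rfl)))
    · rw [← Ideal.zero_eq_bot]
      exact mul_ne_zero h2 (by simpa using ha)
    · rw [Ideal.mul_le]
      intro f hf b hb
      obtain ⟨k, rfl⟩ := Ideal.mem_span_singleton'.1 hb
      have := Ideal.mul_mem_left J k (mem_cond.1 (h3 hf))
      rwa [mul_left_comm] at this

/-! ### Maximal `t`-ideals -/

lemma isTIdeal_sSup {c : Set (Ideal A)} (hc : IsChain (· ≤ ·) c) (hne : c.Nonempty)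
    (h : ∀ I ∈ c, IsTIdeal A I) : IsTIdeal A (sSup c) := by
  rw [isTIdeal_iff]
  obtain ⟨I, hI⟩ := hne
  refine ⟨fun e => (h I hI).1 (le_bot_iff.1 (e ▸ le_sSup hI)), fun F h1 h2 h3 => ?_⟩
  obtain ⟨J, hJ, hFJ⟩ := (Submodule.fg_iff_compact F).1 h1 c _ ⟨I, hI⟩ hc.directedOn (isLUB_sSup c) h3
  exact ((isTIdeal_iff.1 (h J hJ)).2 F h1 h2 hFJ).trans (le_sSup hJ)

lemma exists_le_tMax {I : Ideal A} (hI : IsTIdeal A I) (hI' : I ≠ ⊤) :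
    ∃ M ∈ tMax A, I ≤ M := by
  obtain ⟨M, hIM, hM⟩ := zorn_le_nonempty₀ {J : Ideal A | IsTIdeal A J ∧ J ≠ ⊤} (by
    intro c hc hch y hy
    refine ⟨sSup c, ⟨isTIdeal_sSup hch ⟨y, hy⟩ fun J hJ => (hc hJ).1, ?_⟩,
      fun z hz => le_sSup hz⟩
    intro e
    rw [Ideal.eq_top_iff_one, Submodule.mem_sSup_of_directed ⟨y, hy⟩ hch.directedOn] at e
    obtain ⟨J, hJ, h1⟩ := e
    exact (hc hJ).2 ((Ideal.eq_top_iff_one _).2 h1)) I ⟨hI, hI'⟩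
  exact ⟨M, ⟨hM.prop.1, hM.prop.2, fun J h1 h2 h3 => (hM.eq_of_le ⟨h1, h2⟩ h3).symm⟩, hIM⟩

/-- An ideal contained in no maximal `t`-ideal contains a finitely generated `F` with
`F_v = A`. -/
lemma exists_fg_of_forall_not_le {I : Ideal A} (hI : I ≠ ⊥) (h : ∀ M ∈ tMax A, ¬ I ≤ M) :
    ∃ F : Ideal A, F.FG ∧ F ≠ ⊥ ∧ F ≤ I ∧ (1 : A) ∈ vIdeal A F := by
  rw [← mem_tIdeal hI, ← Ideal.eq_top_iff_one]
  by_contra hne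
  obtain ⟨M, hM, hle⟩ := exists_le_tMax (isTIdeal_tIdeal hI) hne
  exact h M hM (le_tIdeal.trans hle)

/-- `⋂ I A_M ∩ A ⊆ I_t`, the intersection being over all maximal `t`-ideals. -/
lemma mem_tIdeal_of_local {I : Ideal A} (hI : I ≠ ⊥) {a : A}
    (h : ∀ M ∈ tMax A, ∃ s, s ∉ M ∧ s * a ∈ I) : a ∈ tIdeal A I := by
  have hle : I ≤ cond I a := fun r hr => Ideal.mul_mem_right _ _ hr
  obtain ⟨F, h1, h2, h3, h4⟩ := exists_fg_of_forall_not_le (I := cond I a)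
    (fun e => hI (le_bot_iff.1 (e ▸ hle))) (fun M hM hle => by
      obtain ⟨s, hs, hs'⟩ := h M hM
      exact hs (hle hs'))
  have hT := isTIdeal_tIdeal hI
  have := (isTIdeal_iff.1 (isTIdeal_cond hT a)).2 F h1 h2
    (h3.trans fun r hr => le_tIdeal (I := I) hr) h4
  simpa [mem_cond] using this

lemma tMax_isPrime {M : Ideal A} (hM : M ∈ tMax A) : M.IsPrime := by
  obtain ⟨h1, h2, h3⟩ := hM
  refine ⟨h2, fun {a b} hab => ?_⟩
  by_contra! hne
  -- `(M : b)` is a proper `t`-ideal containing `M` and `a`.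
  have := h3 (cond M b) (isTIdeal_cond h1 b)
    (fun e => hne.2 (by simpa [mem_cond] using (Ideal.eq_top_iff_one _).1 e))
    (fun r hr => Ideal.mul_mem_right _ _ hr)
  exact hne.1 (this ▸ (mem_cond.2 hab))

/-! ### Primes whose localization is a valuation domain -/

/-- `A_P` is a valuation domain: of any two elements one divides the other up to a factor
outside `P`. -/
def ValAt (P : Ideal A) : Prop := ∀ c d : A, ∃ s, s ∉ P ∧ (c ∣ s * d ∨ d ∣ s * c)

lemma ValAt.mono {P M : Ideal A} (hM : ValAt M) (h : P ≤ M) : ValAt P := fun c d =>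
  let ⟨s, hs, hs'⟩ := hM c d
  ⟨s, fun e => hs (h e), hs'⟩

lemma IsPVMD.valAt (hA : IsPVMD A) {M : Ideal A} (hM : M ∈ tMax A) : ValAt M := by
  intro c d
  have hP := tMax_isPrime hM
  have h1 : (1 : A) ∉ M := fun e => hP.ne_top ((Ideal.eq_top_iff_one _).2 e)
  by_cases hc : c = 0
  · exact ⟨1, h1, Or.inr (by simp [hc])⟩
  by_cases hd : d = 0
  · exact ⟨1, h1, Or.inl (by simp [hd])⟩
  rcases hA M hM (algebraMap A (FractionRing A) c / algebraMap A (FractionRing A) d)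
    (div_ne_zero (by simpa using hc) (by simpa using hd)) with h | h
  · obtain ⟨s, hs, h⟩ := (frac_mem_locSet hd).1 h
    exact ⟨s, hs, Or.inr (by rwa [mul_comm])⟩
  · rw [inv_div] at h
    obtain ⟨s, hs, h⟩ := (frac_mem_locSet hc).1 h
    exact ⟨s, hs, Or.inl (by rwa [mul_comm])⟩

/-- Over a valuation domain `A_P` a finitely generated ideal becomes principal, generated by
one of its elements. -/
lemma exists_local_generator {P : Ideal A} (hP : P.IsPrime) (hV : ValAt P) {F : Ideal A}
    (hF : F.FG) : ∃ a ∈ F, ∃ s, s ∉ P ∧ ∀ f ∈ F, a ∣ s * f := by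
  induction F, hF using Submodule.fg_induction with
  | singleton x =>
    refine ⟨x, Submodule.mem_span_singleton_self x, 1,
      fun e => hP.ne_top ((Ideal.eq_top_iff_one _).2 e), fun f hf => ?_⟩
    obtain ⟨k, rfl⟩ := Submodule.mem_span_singleton.1 hf
    exact ⟨k, by simp [mul_comm]⟩
  | sup M₁ M₂ hM₁ hM₂ ih₁ ih₂ =>
    obtain ⟨a, ha, s, hs, h⟩ := ih₁
    obtain ⟨b, hb, t, ht, h'⟩ := ih₂
    obtain ⟨u, hu, hab⟩ := hV a b
    have key : s * t * u ∉ P := fun e =>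
      ((hP.mem_or_mem e).elim (fun e => (hP.mem_or_mem e).elim hs ht) hu)
    rcases hab with hab | hab
    · refine ⟨a, Submodule.mem_sup_left ha, _, key, fun f hf => ?_⟩
      obtain ⟨f₁, hf₁, f₂, hf₂, rfl⟩ := Submodule.mem_sup.1 hf
      rw [mul_add]
      refine dvd_add ((h f₁ hf₁).trans ⟨t * u, by ring⟩) ?_
      exact hab.trans ((mul_dvd_mul_left u (h' f₂ hf₂)).trans ⟨s, by ring⟩)
    · refine ⟨b, Submodule.mem_sup_right hb, _, key, fun f hf => ?_⟩
      obtain ⟨f₁, hf₁, f₂, hf₂, rfl⟩ := Submodule.mem_sup.1 hf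
      rw [mul_add]
      refine dvd_add ?_ ((h' f₂ hf₂).trans ⟨s * u, by ring⟩)
      exact hab.trans ((mul_dvd_mul_left u (h f₁ hf₁)).trans ⟨t, by ring⟩)

/-- If `a` generates `F` locally then it generates `F_v` locally, with the same `s`. -/
lemma dvd_of_mem_vIdeal {F : Ideal A} {a s : A} (ha : a ≠ 0) (h : ∀ f ∈ F, a ∣ s * f)
    {r : A} (hr : r ∈ vIdeal A F) : a ∣ s * r :=
  mem_vIdeal.1 hr s a ha h

lemma ne_zero_of_local_generator {P : Ideal A} {F : Ideal A} (hF : F ≠ ⊥) {a s : A}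
    (hs : s ∉ P) (h : ∀ f ∈ F, a ∣ s * f) : a ≠ 0 := by
  rintro rfl
  obtain ⟨f, hf, hf0⟩ := Submodule.exists_mem_ne_zero_of_ne_bot hF
  rcases mul_eq_zero.1 (zero_dvd_iff.1 (h f hf)) with e | e
  · exact hs (e ▸ zero_mem _)
  · exact hf0 e

lemma isTPrime_of_valAt {P : Ideal A} (hP : P.IsPrime) (h0 : P ≠ ⊥) (hV : ValAt P) :
    IsTPrime A P := by
  refine ⟨hP, isTIdeal_iff.2 ⟨h0, fun F h1 h2 h3 r hr => ?_⟩⟩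
  obtain ⟨a, ha, s, hs, h⟩ := exists_local_generator hP hV h1
  have := P.mem_of_dvd (dvd_of_mem_vIdeal (ne_zero_of_local_generator h2 hs h) h hr) (h3 ha)
  exact (hP.mem_or_mem this).resolve_left hs

lemma IsTPrime.valAt (hA : IsPVMD A) {P : Ideal A} (hP : IsTPrime A P) : ValAt P := by
  obtain ⟨M, hM, hle⟩ := exists_le_tMax hP.2 hP.1.ne_top
  exact (hA.valAt hM).mono hle

lemma tMax_isTPrime {M : Ideal A} (hM : M ∈ tMax A) : IsTPrime A M := ⟨tMax_isPrime hM, hM.1⟩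

end Basic

/-! ### `t`-linked overrings of a PVMD -/

section Overring

set_option linter.unusedSectionVars false

variable {R : Type*} [CommRing R] [IsDomain R] {T : Subring (FractionRing R)}

lemma coe_intoOverring (h : IsOverring R T) (r : R) :
    ((intoOverring R T h r : T) : FractionRing R) = algebraMap R (FractionRing R) r := rfl

lemma intoOverring_injective (h : IsOverring R T) : Function.Injective (intoOverring R T h) :=
  fun _ _ e => IsFractionRing.injective R (FractionRing R) (congrArg Subtype.val e)

/-- Each element of `T` is a fraction of elements of `R`. -/
lemma exists_frac (h : IsOverring R T) (x : T) :
    ∃ r s : R, s ≠ 0 ∧ x * intoOverring R T h s = intoOverring R T h r := by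
  obtain ⟨r, s, hs, e⟩ := IsFractionRing.div_surjective (A := R) (x : FractionRing R)
  have hs : s ≠ 0 := nonZeroDivisors.ne_zero hs
  have hs' : algebraMap R (FractionRing R) s ≠ 0 := by simpa using hs
  refine ⟨r, s, hs, Subtype.ext ?_⟩
  rw [Subring.coe_mul, coe_intoOverring, coe_intoOverring, ← e]
  field_simp

lemma comap_ne_bot (h : IsOverring R T) {Q : Ideal T} (hQ : Q ≠ ⊥) :
    Ideal.comap (intoOverring R T h) Q ≠ ⊥ := by
  obtain ⟨q, hq, hq0⟩ := Submodule.exists_mem_ne_zero_of_ne_bot hQ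
  obtain ⟨r, s, hs, e⟩ := exists_frac h q
  intro hb
  have hr : r ∈ Ideal.comap (intoOverring R T h) Q := by
    rw [Ideal.mem_comap, ← e]; exact Ideal.mul_mem_right _ _ hq
  rw [hb, Ideal.mem_bot] at hr
  rw [hr, map_zero] at e
  rcases mul_eq_zero.1 e with e | e
  · exact hq0 e
  · exact hs (intoOverring_injective h (e.trans (map_zero _).symm))

/-- In a `t`-linked overring, proper `t`-ideals contract into some maximal `t`-ideal. -/
lemma exists_comap_le_tMax (h : IsOverring R T) (hT : IsTLinked R T) {Q : Ideal T}
    (hQ : IsTIdeal T Q) (hQ' : Q ≠ ⊤) :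
    ∃ M ∈ tMax R, Ideal.comap (intoOverring R T h) Q ≤ M := by
  by_contra! hne
  obtain ⟨F, h1, h2, h3, h4⟩ := exists_fg_of_forall_not_le (comap_ne_bot h hQ.1) hne
  have hlink := hT F h2 h1 (inv_eq_one_iff.2 h4)
  refine hQ' ((Ideal.eq_top_iff_one _).2 ?_)
  refine (isTIdeal_iff.1 hQ).2 (F.map (intoOverring R T h)) (h1.map _) ?_
    (Ideal.map_le_iff_le_comap.2 h3) ?_
  · rwa [Ne, Ideal.map_eq_bot_iff_of_injective (intoOverring_injective h)]
  · rw [mem_vIdeal]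
    intro c d hd hF
    have hd' : (d : FractionRing R) ≠ 0 := fun e => hd (Subtype.ext e)
    have key : (c : FractionRing R) / d ∈ (T : Set (FractionRing R)) := by
      rw [← hlink]
      intro a ha
      obtain ⟨y, hy⟩ := hF _ (Ideal.mem_map_of_mem (intoOverring R T h) ha)
      have := congrArg (Subtype.val : T → FractionRing R) hy
      rw [Subring.coe_mul, Subring.coe_mul, coe_intoOverring] at this
      have e : (c : FractionRing R) / d * algebraMap R (FractionRing R) a = y := by
        field_simp
        rw [this]
      rw [e]
      exact y.2
    refine ⟨⟨_, key⟩, Subtype.ext ?_⟩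
    rw [mul_one, Subring.coe_mul]
    field_simp

/-- If `Q ∩ R` lies in a maximal `t`-ideal of the PVMD `R`, then `T ⊆ R_{Q ∩ R}`. -/
lemma exists_frac_of_comap_le (hR : IsPVMD R) (h : IsOverring R T) {Q : Ideal T}
    {M : Ideal R} (hM : M ∈ tMax R)
    (hle : Ideal.comap (intoOverring R T h) Q ≤ M) (x : T) :
    ∃ r s : R, intoOverring R T h s ∉ Q ∧ x * intoOverring R T h s = intoOverring R T h r := by
  obtain ⟨r, s, hs, e⟩ := exists_frac h x
  have hs' : intoOverring R T h s ≠ 0 := fun e' =>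
    hs (intoOverring_injective h (e'.trans (map_zero _).symm))
  obtain ⟨u, hu, ⟨k, hk⟩ | ⟨k, hk⟩⟩ := hR.valAt hM r s
  · -- `u = k x`, so `k` cannot lie in `Q`.
    have hk' := congrArg (intoOverring R T h) hk
    rw [map_mul, map_mul, ← e] at hk'
    have hxk : x * intoOverring R T h k = intoOverring R T h u := by
      apply mul_right_cancel₀ hs'
      rw [hk']; ring
    refine ⟨u, k, fun hkQ => hu (hle ?_), hxk⟩
    rw [Ideal.mem_comap, ← hxk]
    exact Ideal.mul_mem_left _ _ hkQ
  · have hk' := congrArg (intoOverring R T h) hk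
    rw [map_mul, map_mul, ← e] at hk'
    refine ⟨k, u, fun huQ => hu (hle huQ), ?_⟩
    apply mul_right_cancel₀ hs'
    rw [mul_right_comm, mul_comm, hk', mul_comm]

/-- A maximal `t`-ideal `Q` of a `t`-linked overring `T` of a PVMD contracts to a `t`-prime,
and `T ⊆ R_{Q ∩ R}`. -/
lemma tMax_comap (hR : IsPVMD R) (h : IsOverring R T) (hT : IsTLinked R T) {Q : Ideal T}
    (hQ : Q ∈ tMax T) :
    IsTPrime R (Ideal.comap (intoOverring R T h) Q) ∧ ∀ x : T, ∃ r s : R,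
      intoOverring R T h s ∉ Q ∧ x * intoOverring R T h s = intoOverring R T h r := by
  have hQp := tMax_isPrime hQ
  obtain ⟨M, hM, hle⟩ := exists_comap_le_tMax h hT hQ.1 hQ.2.1
  exact ⟨isTPrime_of_valAt (hQp.comap _) (comap_ne_bot h hQ.1.1) ((hR.valAt hM).mono hle),
    exists_frac_of_comap_le hR h hM hle⟩

/-- Primes of `T` with the fraction property are ordered as their contractions. -/
lemma le_of_comap_le (h : IsOverring R T) {N Q : Ideal T} (hQ : Q.IsPrime)
    (hfr : ∀ x : T, ∃ r s : R,
      intoOverring R T h s ∉ Q ∧ x * intoOverring R T h s = intoOverring R T h r)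
    (hle : Ideal.comap (intoOverring R T h) N ≤ Ideal.comap (intoOverring R T h) Q) :
    N ≤ Q := by
  intro x hx
  obtain ⟨r, s, hs, e⟩ := hfr x
  have hr : r ∈ Ideal.comap (intoOverring R T h) N := by
    rw [Ideal.mem_comap, ← e]; exact Ideal.mul_mem_right _ _ hx
  have hrQ := hle hr
  rw [Ideal.mem_comap, ← e] at hrQ
  exact (hQ.mem_or_mem hrQ).resolve_right hs

end Overring

/-! ### Generalized Krull domains: idempotent `t`-primes and the `t#`-property -/

section Forward

variable {R : Type*} [CommRing R] [IsDomain R]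

lemma isTIdeal_tIdeal_mul {I J : Ideal R} (hI : IsTIdeal R I) (hJ : IsTIdeal R J) :
    IsTIdeal R (tIdeal R (I * J)) := by
  refine isTIdeal_tIdeal ?_
  rw [← Ideal.zero_eq_bot]
  exact mul_ne_zero hI.1 hJ.1

/-- If `P = (P²)_t`, the `t`-ideals containing `P` form a `t`-localizing system; if that
system is `v`-finite, `P` is `v`-finite and so locally principal, which is absurd. -/
lemma ne_tIdeal_sq (hR : IsPVMD R)
    (H : ∀ Φ : Set (Ideal R), IsTLocalizingSystem R Φ → ∀ I ∈ Φ, ∃ J ∈ Φ, J ≤ I ∧ IsVFinite R J)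
    {P : Ideal R} (hP : IsTPrime R P) : P ≠ tIdeal R (P * P) := by
  intro hPP
  obtain ⟨J, ⟨hJ, hPJ⟩, hJP, hfin⟩ := H {I | IsTIdeal R I ∧ P ≤ I} (by
    refine ⟨fun I hI => hI.1, fun I hI J hJ => ?_, fun I hI J hJ hIJ => ⟨hJ, hI.2.trans hIJ⟩,
      fun I hI J hJ hc => ⟨hJ, ?_⟩⟩
    · have hT := isTIdeal_tIdeal_mul hI.1 hJ.1
      refine ⟨hT, hPP.le.trans (tIdeal_le ?_ hT)⟩
      exact (Ideal.mul_mono hI.2 hJ.2).trans le_tIdeal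
    · refine hPP.le.trans (tIdeal_le (Ideal.mul_le.2 fun x hx a ha => ?_) hJ)
      have := (hc a (hI.2 ha)).2 hx
      rw [colon_span_eq, (isTIdeal_cond hJ a).2] at this
      exact mem_cond.1 this) P ⟨hP.2, le_rfl⟩
  obtain ⟨F, h1, h2, rfl⟩ := hfin.exists_ne_bot hJ.1
  obtain ⟨a, ha, s, hs, hF⟩ := exists_local_generator hP.1 (hP.valAt hR) h1
  have ha0 := ne_zero_of_local_generator h2 hs hF
  -- `s P ⊆ aR` gives `s² P² ⊆ a² R`, hence `s² a ∈ a² R`.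
  have hsP : ∀ p ∈ P, a ∣ s * p := fun p hp => dvd_of_mem_vIdeal ha0 hF (hPJ hp)
  have haP : a ∈ P := hJP (le_vIdeal_s13 _ ha)
  have hT : IsTIdeal R (vIdeal R (Ideal.span {a * a})) :=
    isTIdeal_vIdeal (by simpa using ha0)
  have hle : P * P ≤ cond (vIdeal R (Ideal.span {a * a})) (s * s) := by
    rw [Ideal.mul_le]
    intro p hp q hq
    refine le_vIdeal_s13 _ (Ideal.mem_span_singleton.2 ?_)
    have := mul_dvd_mul (hsP p hp) (hsP q hq)
    rwa [LinearMap.mulRight_apply, show p * q * (s * s) = s * p * (s * q) by ring]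
  have hmem := tIdeal_le hle (isTIdeal_cond hT _) (hPP.le haP)
  obtain ⟨k, hk⟩ := mem_vIdeal.1 (mem_cond.1 hmem) 1 (a * a) (mul_ne_zero ha0 ha0)
    (fun b hb => by rw [one_mul]; exact Ideal.mem_span_singleton.1 hb)
  have : s * s = a * k := mul_left_cancel₀ ha0 (by linear_combination hk)
  have hss : s * s ∈ P := this ▸ Ideal.mul_mem_right _ _ haP
  exact (hP.1.mem_or_mem hss).elim hs hs

lemma isTLocalizingSystem_Phi {Λ : Set (Ideal R)} (hΛ : ∀ P ∈ Λ, P.IsPrime) :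
    IsTLocalizingSystem R (Phi R Λ) := by
  refine ⟨fun I hI => hI.1, fun I hI J hJ => ?_, fun I hI J hJ hIJ =>
    ⟨hJ, fun P hP hle => hI.2 P hP (hIJ.trans hle)⟩, fun I hI J hJ hc => ⟨hJ, fun P hP hle => ?_⟩⟩
  · refine ⟨isTIdeal_tIdeal_mul hI.1 hJ.1, fun P hP hle => ?_⟩
    exact ((hΛ P hP).mul_le.1 (le_tIdeal.trans hle)).elim (hI.2 P hP) (hJ.2 P hP)
  · obtain ⟨a, ha, haP⟩ := SetLike.not_le_iff_exists.1 (hI.2 P hP)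
    refine (hc a ha).2 P hP ?_
    rw [colon_span_eq, (isTIdeal_cond hJ a).2]
    intro r hr
    exact ((hΛ P hP).mem_or_mem (hle hr)).resolve_right haP

/-- The separation at the heart of the `t#`-property: no `T_N` contains the intersection of
the localizations of `T` at other maximal `t`-ideals. -/
lemma exists_not_mem_locSet (hR : IsPVMD R)
    (H : ∀ Φ : Set (Ideal R), IsTLocalizingSystem R Φ → ∀ I ∈ Φ, ∃ J ∈ Φ, J ≤ I ∧ IsVFinite R J)
    {T : Subring (FractionRing R)} (h : IsOverring R T) (hT : IsTLinked R T)
    {S : Set (Ideal T)} (hS : S ⊆ tMax T) {N : Ideal T} (hN : N ∈ tMax T) (hNS : N ∉ S) :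
    ∃ x, x ∈ (⋂ M ∈ S, locSet T M) ∧ x ∉ locSet T N := by
  obtain ⟨hPN, -⟩ := tMax_comap hR h hT hN
  have hNp := tMax_isPrime hN
  obtain ⟨J, hJ, hJN, hfin⟩ := H _ (isTLocalizingSystem_Phi
    (Λ := (fun M => Ideal.comap (intoOverring R T h) M) '' S) (by
      rintro _ ⟨M, hM, rfl⟩
      exact (tMax_isPrime (hS hM)).comap _)) (Ideal.comap (intoOverring R T h) N) ⟨hPN.2, by
      rintro _ ⟨M, hM, rfl⟩ hle
      have hMp := tMax_isPrime (hS hM)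
      have := le_of_comap_le h hMp (tMax_comap hR h hT (hS hM)).2 hle
      exact hNS (hN.2.2 M (hS hM).1 hMp.ne_top this ▸ hM)⟩
  obtain ⟨F, h1, h2, rfl⟩ := hfin.exists_ne_bot hJ.1.1
  obtain ⟨a, ha, s, hs, hF⟩ := exists_local_generator hPN.1 (hPN.valAt hR) h1
  have ha0 := ne_zero_of_local_generator h2 hs hF
  have ha0' : intoOverring R T h a ≠ 0 := fun e' =>
    ha0 (intoOverring_injective h (e'.trans (map_zero _).symm))
  -- `s / a` lies in `F⁻¹`, but not in the localization at `N ∩ R`.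
  refine ⟨algebraMap T (FractionRing T) (intoOverring R T h s) /
    algebraMap T (FractionRing T) (intoOverring R T h a), ?_, ?_⟩
  · rw [Set.mem_iInter₂]
    intro M hM
    rw [frac_mem_locSet ha0']
    have hMt := (tMax_comap hR h hT (hS hM)).1
    obtain ⟨f, hf, hfM⟩ : ∃ f ∈ F, f ∉ Ideal.comap (intoOverring R T h) M := by
      by_contra! hle
      exact hJ.2 _ ⟨M, hM, rfl⟩ ((isTIdeal_iff.1 hMt.2).2 F h1 h2 hle)
    refine ⟨intoOverring R T h f, hfM, ?_⟩
    rw [← map_mul]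
    exact map_dvd _ (hF f hf)
  · rw [frac_mem_locSet ha0']
    rintro ⟨t, ht, hdvd⟩
    have haN : intoOverring R T h a ∈ N := hJN (le_vIdeal_s13 _ ha)
    exact (hNp.mem_or_mem (N.mem_of_dvd hdvd haN)).elim hs ht

lemma isTSharp_of_linked (hR : IsPVMD R)
    (H : ∀ Φ : Set (Ideal R), IsTLocalizingSystem R Φ → ∀ I ∈ Φ, ∃ J ∈ Φ, J ≤ I ∧ IsVFinite R J)
    {T : Subring (FractionRing R)} (h : IsOverring R T) (hT : IsTLinked R T) : IsTSharp T := by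
  have key : ∀ S₁ S₂ : Set (Ideal T), S₁ ⊆ tMax T → S₂ ⊆ tMax T →
      (⋂ M ∈ S₁, locSet T M) = (⋂ M ∈ S₂, locSet T M) → S₁ ⊆ S₂ := by
    intro S₁ S₂ h₁ h₂ he N hN
    by_contra hNS
    obtain ⟨x, hx, hx'⟩ := exists_not_mem_locSet hR H h hT h₂ (h₁ hN) hNS
    rw [← he, Set.mem_iInter₂] at hx
    exact hx' (hx N hN)
  exact fun S₁ S₂ h₁ h₂ hne he =>
    hne ((key S₁ S₂ h₁ h₂ he).antisymm (key S₂ S₁ h₂ h₁ he.symm))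

end Forward

/-! ### Intersections of localizations at `t`-primes -/

section Backward

set_option linter.unusedSectionVars false

variable {R : Type*} [CommRing R] [IsDomain R]

/-- The overring `⋂_{P ∈ Λ} R_P` for a set `Λ` of primes. -/
def interLoc (Λ : Set (Ideal R)) (hΛ : ∀ P ∈ Λ, P.IsPrime) : Subring (FractionRing R) where
  carrier := {x | ∀ P ∈ Λ, x ∈ locSet R P}
  one_mem' := fun P hP => ⟨1, 1, fun e => (hΛ P hP).ne_top ((Ideal.eq_top_iff_one _).2 e),
    by simp⟩
  zero_mem' := fun P hP => ⟨0, 1, fun e => (hΛ P hP).ne_top ((Ideal.eq_top_iff_one _).2 e),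
    by simp⟩
  mul_mem' := by
    intro x y hx hy P hP
    obtain ⟨r, s, hs, e⟩ := hx P hP
    obtain ⟨r', s', hs', e'⟩ := hy P hP
    refine ⟨r * r', s * s', fun h => ((hΛ P hP).mem_or_mem h).elim hs hs', ?_⟩
    rw [map_mul, map_mul, ← e, ← e']; ring
  add_mem' := by
    intro x y hx hy P hP
    obtain ⟨r, s, hs, e⟩ := hx P hP
    obtain ⟨r', s', hs', e'⟩ := hy P hP
    refine ⟨r * s' + r' * s, s * s', fun h => ((hΛ P hP).mem_or_mem h).elim hs hs', ?_⟩
    rw [map_add, map_mul, map_mul, map_mul, ← e, ← e']; ring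
  neg_mem' := by
    intro x hx P hP
    obtain ⟨r, s, hs, e⟩ := hx P hP
    exact ⟨-r, s, hs, by rw [map_neg, ← e]; ring⟩

lemma isOverring_interLoc (Λ : Set (Ideal R)) (hΛ : ∀ P ∈ Λ, P.IsPrime) :
    IsOverring R (interLoc Λ hΛ) := fun r P hP =>
  ⟨r, 1, fun e => (hΛ P hP).ne_top ((Ideal.eq_top_iff_one _).2 e), by simp⟩

/-- Intersections of localizations at `t`-primes are `t`-linked: an ideal `F` with
`F⁻¹ = R` is contained in no `t`-prime. -/
lemma isTLinked_interLoc (Λ : Set (Ideal R)) (hΛ : ∀ P ∈ Λ, IsTPrime R P) :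
    IsTLinked R (interLoc Λ fun P hP => (hΛ P hP).1) := by
  intro F h2 h1 hinv
  have h1v := inv_eq_one_iff.1 hinv
  ext x
  refine ⟨fun hx P hP => ?_, fun hx a _ => mul_mem hx (isOverring_interLoc Λ _ a)⟩
  obtain ⟨f, hf, hfP⟩ : ∃ f ∈ F, f ∉ P := by
    by_contra! hle
    exact (hΛ P hP).1.ne_top
      ((Ideal.eq_top_iff_one _).2 ((isTIdeal_iff.1 (hΛ P hP).2).2 F h1 h2 hle h1v))
  obtain ⟨r, s, hs, e⟩ := hx f hf P hP
  refine ⟨r, f * s, fun h => ((hΛ P hP).1.mem_or_mem h).elim hfP hs, ?_⟩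
  rw [← e, map_mul]; ring

variable {T : Subring (FractionRing R)}

/-- The prime `P R_P ∩ T` of an overring `T ⊆ R_P`. -/
def center (h : IsOverring R T) (P : Ideal R) (hP : P.IsPrime)
    (hTP : ∀ x : T, ∃ r s : R, s ∉ P ∧ x * intoOverring R T h s = intoOverring R T h r) :
    Ideal T where
  carrier := {x | ∃ r s : R, r ∈ P ∧ s ∉ P ∧ x * intoOverring R T h s = intoOverring R T h r}
  zero_mem' := ⟨0, 1, zero_mem _, fun e => hP.ne_top ((Ideal.eq_top_iff_one _).2 e), by simp⟩
  add_mem' := by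
    rintro x y ⟨r, s, hr, hs, e⟩ ⟨r', s', hr', hs', e'⟩
    refine ⟨r * s' + r' * s, s * s', add_mem (Ideal.mul_mem_right _ _ hr)
      (Ideal.mul_mem_right _ _ hr'), fun h => (hP.mem_or_mem h).elim hs hs', ?_⟩
    rw [map_add, map_mul, map_mul, map_mul, ← e, ← e']; ring
  smul_mem' := by
    rintro x y ⟨r, s, hr, hs, e⟩
    obtain ⟨r', s', hs', e'⟩ := hTP x
    refine ⟨r' * r, s' * s, Ideal.mul_mem_left _ _ hr,
      fun h => (hP.mem_or_mem h).elim hs' hs, ?_⟩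
    rw [map_mul, map_mul, ← e, ← e', smul_eq_mul]; ring

section Center

variable (h : IsOverring R T) {P : Ideal R} (hP : P.IsPrime)
  (hTP : ∀ x : T, ∃ r s : R, s ∉ P ∧ x * intoOverring R T h s = intoOverring R T h r)

include hTP in
lemma mem_center_iff {x : T} {r s : R} (hs : s ∉ P)
    (e : x * intoOverring R T h s = intoOverring R T h r) :
    x ∈ center h P hP hTP ↔ r ∈ P := by
  refine ⟨?_, fun hr => ⟨r, s, hr, hs, e⟩⟩
  rintro ⟨r', s', hr', hs', e'⟩
  have : r * s' = r' * s := intoOverring_injective h (by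
    rw [map_mul, map_mul, ← e, ← e']; ring)
  exact (hP.mem_or_mem (this ▸ Ideal.mul_mem_right _ _ hr' : r * s' ∈ P)).resolve_right hs'

lemma comap_center : Ideal.comap (intoOverring R T h) (center h P hP hTP) = P := by
  ext r
  exact mem_center_iff h hP hTP (s := 1)
    (fun e => hP.ne_top ((Ideal.eq_top_iff_one _).2 e)) (by simp)

lemma center_isPrime : (center h P hP hTP).IsPrime := by
  refine ⟨fun e => hP.ne_top ?_, fun {x y} hxy => ?_⟩
  · rw [← comap_center h hP hTP, e, Ideal.comap_top]
  · obtain ⟨r, s, hs, e⟩ := hTP x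
    obtain ⟨r', s', hs', e'⟩ := hTP y
    have hss : s * s' ∉ P := fun h => (hP.mem_or_mem h).elim hs hs'
    rw [mem_center_iff h hP hTP hss (r := r * r')
      (by rw [map_mul, map_mul, ← e, ← e']; ring)] at hxy
    rw [mem_center_iff h hP hTP hs e, mem_center_iff h hP hTP hs' e']
    exact hP.mem_or_mem hxy

lemma center_valAt (hV : ValAt P) : ValAt (center h P hP hTP) := by
  intro x y
  obtain ⟨r, s, hs, e⟩ := hTP x
  obtain ⟨r', s', hs', e'⟩ := hTP y
  obtain ⟨u, hu, hd⟩ := hV r r'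
  have hout : ∀ t, t ∉ P → intoOverring R T h t ∉ center h P hP hTP := fun t ht hmem =>
    ht (by rw [← comap_center h hP hTP]; exact hmem)
  rcases hd with ⟨k, hk⟩ | ⟨k, hk⟩
  · refine ⟨_, hout (u * s') fun h => (hP.mem_or_mem h).elim hu hs', Or.inl
      ⟨intoOverring R T h (s * k), ?_⟩⟩
    have := congrArg (intoOverring R T h) hk
    simp only [map_mul] at this ⊢
    rw [← e, ← e'] at this
    linear_combination this
  · refine ⟨_, hout (u * s) fun h => (hP.mem_or_mem h).elim hu hs, Or.inr
      ⟨intoOverring R T h (s' * k), ?_⟩⟩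
    have := congrArg (intoOverring R T h) hk
    simp only [map_mul] at this ⊢
    rw [← e, ← e'] at this
    linear_combination this

lemma center_isTPrime (h0 : P ≠ ⊥) (hV : ValAt P) : IsTPrime T (center h P hP hTP) := by
  refine isTPrime_of_valAt (center_isPrime h hP hTP) (fun e => h0 ?_) (center_valAt h hP hTP hV)
  rw [← comap_center h hP hTP, e, ← RingHom.ker_eq_comap_bot]
  exact (RingHom.injective_iff_ker_eq_bot _).1 (intoOverring_injective h)

/-- The center of a maximal `t`-ideal is a maximal `t`-ideal. -/
lemma center_mem_tMax (hR : IsPVMD R) (hT : IsTLinked R T) (hM : P ∈ tMax R) :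
    center h P hP hTP ∈ tMax T := by
  refine ⟨(center_isTPrime h hP hTP hM.1.1 (hR.valAt hM)).2, (center_isPrime h hP hTP).ne_top,
    fun J hJ hJ' hle => le_antisymm ?_ hle⟩
  obtain ⟨Q, hQ, hJQ⟩ := exists_le_tMax hJ hJ'
  have hQt := (tMax_comap hR h hT hQ).1
  have hPQ : P ≤ Ideal.comap (intoOverring R T h) Q := by
    conv_lhs => rw [← comap_center h hP hTP]
    exact Ideal.comap_mono (hle.trans hJQ)
  have hQP := hM.2.2 _ hQt.2 hQt.1.ne_top hPQ
  refine hJQ.trans (le_of_comap_le h (center_isPrime h hP hTP) (fun x => ?_) ?_)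
  · obtain ⟨r, s, hs, e⟩ := hTP x
    exact ⟨r, s, fun hmem => hs (by rw [← comap_center h hP hTP]; exact hmem), e⟩
  · rw [hQP, comap_center]

end Center

/-! ### Separating a `t`-prime from the maximal `t`-ideals not containing it -/

/-- The `t#`-property of `T = R_P ∩ ⋂_{M ⊉ P} R_M` provides a fraction `c / d` lying in every
`R_M` with `M ⊉ P` but not in `R_P`. The center of `P` on `T` need not be a maximal `t`-ideal,
so the property is applied to a maximal `t`-ideal `N` of `T` above it. -/
lemma exists_separating_fraction (hR : IsPVMD R)
    (H : ∀ T : Subring (FractionRing R), IsOverring R T → IsTLinked R T → IsTSharp T)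
    {P : Ideal R} (hP : IsTPrime R P) :
    ∃ c d : R, d ≠ 0 ∧ (∀ M ∈ tMax R, ¬ P ≤ M → ∃ m, m ∉ M ∧ d ∣ c * m) ∧
      ∀ s, s ∉ P → ¬ d ∣ c * s := by
  set S : Set (Ideal R) := {M | M ∈ tMax R ∧ ¬ P ≤ M} with hSdef
  have hΛ : ∀ Q ∈ insert P S, IsTPrime R Q := by
    rintro Q (rfl | hQ)
    · exact hP
    · exact tMax_isTPrime hQ.1
  set T := interLoc (insert P S) fun Q hQ => (hΛ Q hQ).1 with hTdef
  have h : IsOverring R T := isOverring_interLoc _ _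
  have hT : IsTLinked R T := isTLinked_interLoc _ hΛ
  have hTQ : ∀ Q ∈ insert P S, ∀ x : T, ∃ r s : R, s ∉ Q ∧
      x * intoOverring R T h s = intoOverring R T h r := by
    intro Q hQ x
    obtain ⟨r, s, hs, e⟩ := x.2 Q hQ
    exact ⟨r, s, hs, Subtype.ext e⟩
  have hPΛ : P ∈ insert P S := Set.mem_insert _ _
  have hCP := center_isTPrime h hP.1 (hTQ P hPΛ) hP.2.1 (hP.valAt hR)
  obtain ⟨N, hN, hCN⟩ := exists_le_tMax hCP.2 hCP.1.ne_top
  have hPN : P ≤ Ideal.comap (intoOverring R T h) N := by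
    conv_lhs => rw [← comap_center h hP.1 (hTQ P hPΛ)]
    exact Ideal.comap_mono hCN
  set S₁ : Set (Ideal T) := {Q | ∃ M, ∃ hM : M ∈ S,
    Q = center h M (tMax_isPrime hM.1) (hTQ M (Set.mem_insert_of_mem _ hM))} with hS₁
  have hS₁max : S₁ ⊆ tMax T := by
    rintro _ ⟨M, hM, rfl⟩
    exact center_mem_tMax h _ _ hR hT hM.1
  have hNS₁ : N ∉ S₁ := by
    rintro ⟨M, hM, rfl⟩
    rw [comap_center] at hPN
    exact hM.2 hPN
  have hne := H T h hT S₁ (insert N S₁) hS₁max (Set.insert_subset hN hS₁max)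
    (fun e => hNS₁ (e ▸ Set.mem_insert _ _))
  obtain ⟨x, hx, hxN⟩ : ∃ x, x ∈ (⋂ M ∈ S₁, locSet T M) ∧ x ∉ locSet T N := by
    by_contra! hle
    refine hne (Set.Subset.antisymm (fun x hx => ?_)
      (Set.biInter_subset_biInter_left (Set.subset_insert _ _)))
    rw [Set.biInter_insert]
    exact ⟨hle x hx, hx⟩
  obtain ⟨c', d', hd', rfl⟩ := IsFractionRing.div_surjective (A := T) x
  have hd' : d' ≠ 0 := nonZeroDivisors.ne_zero hd'
  have hd'K : (d' : FractionRing R) ≠ 0 := fun e => hd' (Subtype.ext e)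
  have hloc : ∀ Q ∈ S, (c' : FractionRing R) / d' ∈ locSet R Q := by
    intro Q hQ
    obtain ⟨t, ht, y, hy⟩ := (frac_mem_locSet hd').1 (Set.mem_iInter₂.1 hx _ ⟨Q, hQ, rfl⟩)
    have hQp := tMax_isPrime hQ.1
    have hQT := hTQ Q (Set.mem_insert_of_mem _ hQ)
    obtain ⟨r, s, hs, e⟩ := hQT t
    obtain ⟨r', s', hs', e'⟩ := hQT y
    have hr : r ∉ Q := fun hr => ht ((mem_center_iff h hQp hQT hs e).2 hr)
    refine ⟨r' * s, r * s', fun h => (hQp.mem_or_mem h).elim hr hs', ?_⟩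
    have hyK := congrArg (Subtype.val : T → FractionRing R) hy
    have eK := congrArg (Subtype.val : T → FractionRing R) e
    have eK' := congrArg (Subtype.val : T → FractionRing R) e'
    rw [Subring.coe_mul, Subring.coe_mul] at hyK
    rw [Subring.coe_mul, coe_intoOverring, coe_intoOverring] at eK eK'
    rw [map_mul, map_mul, ← eK, ← eK']
    field_simp
    linear_combination (algebraMap R (FractionRing R) s *
      algebraMap R (FractionRing R) s') * hyK
  have hP' : (c' : FractionRing R) / d' ∉ locSet R P := by
    -- If `c' / d' ∈ R_P`, then `c' / d' ∈ T ⊆ T_N`.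
    intro hmemP
    have hmem : (c' : FractionRing R) / d' ∈ T := by
      rintro Q (rfl | hQ)
      exacts [hmemP, hloc Q hQ]
    apply hxN
    rw [frac_mem_locSet hd']
    refine ⟨1, fun e => hN.2.1 ((Ideal.eq_top_iff_one _).2 e), ⟨_, hmem⟩, Subtype.ext ?_⟩
    rw [mul_one, Subring.coe_mul]
    field_simp
  obtain ⟨c, d, hd, hcd⟩ :=
    IsFractionRing.div_surjective (A := R) ((c' : FractionRing R) / d')
  have hd : d ≠ 0 := nonZeroDivisors.ne_zero hd
  rw [← hcd] at hloc hP'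
  exact ⟨c, d, hd, fun M hM hPM => (frac_mem_locSet hd).1 (hloc M ⟨hM, hPM⟩),
    fun s hs hdvd => hP' ((frac_mem_locSet hd).2 ⟨s, hs, hdvd⟩)⟩

/-- Every finitely generated subideal of `A + A'` lies in the ideal generated by finitely many
elements of `A` and of `A'`. -/
lemma exists_fg_sup {A A' J : Ideal R} (hJ : J.FG) (h : J ≤ A ⊔ A') :
    ∃ F F' : Ideal R, F.FG ∧ F'.FG ∧ F ≤ A ∧ F' ≤ A' ∧ J ≤ F ⊔ F' := by
  induction J, hJ using Submodule.fg_induction with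
  | singleton x =>
    obtain ⟨a, ha, b, hb, rfl⟩ := Submodule.mem_sup.1 (h (Submodule.mem_span_singleton_self x))
    refine ⟨Ideal.span {a}, Ideal.span {b}, ⟨{a}, by simp⟩, ⟨{b}, by simp⟩,
      by simpa [Ideal.span_le] using ha, by simpa [Ideal.span_le] using hb, ?_⟩
    rw [Submodule.span_singleton_le_iff_mem]
    exact Submodule.add_mem_sup (Ideal.subset_span rfl) (Ideal.subset_span rfl)
  | sup M₁ M₂ hM₁ hM₂ ih₁ ih₂ =>
    obtain ⟨F, F', h1, h2, h3, h4, h5⟩ := ih₁ (le_sup_left.trans h)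
    obtain ⟨G, G', k1, k2, k3, k4, k5⟩ := ih₂ (le_sup_right.trans h)
    exact ⟨F ⊔ G, F' ⊔ G', Submodule.FG.sup h1 k1, Submodule.FG.sup h2 k2, sup_le h3 k3,
      sup_le h4 k4, sup_le (h5.trans (sup_le_sup le_sup_left le_sup_left))
        (k5.trans (sup_le_sup le_sup_right le_sup_right))⟩

/-- For finitely many elements `k` with `c ∣ d k`, the ideal of the quotients `d k / c` is
finitely generated and consists of elements `a` with `d ∣ c a`. -/
lemma exists_fg_quotients {c d : R} {F' : Ideal R} (hF' : F'.FG)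
    (h : ∀ k ∈ F', c ∣ d * k) :
    ∃ G : Ideal R, G.FG ∧ (∀ a ∈ G, d ∣ c * a) ∧ ∀ k ∈ F', ∃ a ∈ G, d * k = c * a := by
  induction F', hF' using Submodule.fg_induction with
  | singleton x =>
    obtain ⟨y, hy⟩ := h x (Submodule.mem_span_singleton_self x)
    refine ⟨Ideal.span {y}, ⟨{y}, by simp⟩, fun a ha => ?_, fun k hk => ?_⟩
    · obtain ⟨z, rfl⟩ := Ideal.mem_span_singleton'.1 ha
      exact ⟨z * x, by linear_combination (-z) * hy⟩
    · obtain ⟨z, rfl⟩ := Submodule.mem_span_singleton.1 hk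
      exact ⟨z * y, Ideal.mem_span_singleton'.2 ⟨z, rfl⟩,
        by rw [smul_eq_mul]; linear_combination z * hy⟩
  | sup M₁ M₂ hM₁ hM₂ ih₁ ih₂ =>
    obtain ⟨G, h1, h2, h3⟩ := ih₁ fun k hk => h k (Submodule.mem_sup_left hk)
    obtain ⟨G', h1', h2', h3'⟩ := ih₂ fun k hk => h k (Submodule.mem_sup_right hk)
    refine ⟨G ⊔ G', Submodule.FG.sup h1 h1', fun a ha => ?_, fun k hk => ?_⟩
    · obtain ⟨x, hx, y, hy, rfl⟩ := Submodule.mem_sup.1 ha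
      rw [mul_add]; exact dvd_add (h2 x hx) (h2' y hy)
    · obtain ⟨x, hx, y, hy, rfl⟩ := Submodule.mem_sup.1 hk
      obtain ⟨a, ha, e⟩ := h3 x hx
      obtain ⟨b, hb, e'⟩ := h3' y hy
      exact ⟨a + b, Submodule.add_mem_sup ha hb, by rw [mul_add, mul_add, e, e']⟩

/-- In a PVMD the conductor `(dR : c)` has, up to `t`-closure, finitely many generators:
`(c, d)` is `t`-invertible, so finitely many elements `a` of the conductor are enough to
express `1` through the elements `a` and `(c / d) a`. -/
lemma exists_fg_conductor (hR : IsPVMD R) {c d : R} (hd : d ≠ 0) :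
    ∃ F : Ideal R, F.FG ∧ (∀ a ∈ F, d ∣ c * a) ∧
      ∀ M ∈ tMax R, (∃ m, m ∉ M ∧ d ∣ c * m) → ¬ F ≤ M := by
  set A := cond (Ideal.span {d}) c with hA
  set A' := cond (Ideal.span {c}) d with hA'
  have memA : ∀ a, a ∈ A ↔ d ∣ c * a := fun a => by
    rw [hA, mem_cond, Ideal.mem_span_singleton, mul_comm]
  have memA' : ∀ a, a ∈ A' ↔ c ∣ d * a := fun a => by
    rw [hA', mem_cond, Ideal.mem_span_singleton, mul_comm]
  obtain ⟨J, h1, h2, h3, h4⟩ := exists_fg_of_forall_not_le (I := A ⊔ A')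
    (fun e => hd ((Submodule.mem_bot R).1
      (e ▸ Submodule.mem_sup_left ((memA d).2 (dvd_mul_left _ _)))))
    (fun M hM hle => by
      obtain ⟨s, hs, hcd | hcd⟩ := hR.valAt hM c d
      · exact hs (hle (Submodule.mem_sup_right ((memA' s).2 (by rwa [mul_comm]))))
      · exact hs (hle (Submodule.mem_sup_left ((memA s).2 (by rwa [mul_comm])))))
  obtain ⟨F, F', hF, hF', hFA, hFA', hJ⟩ := exists_fg_sup h1 h3
  obtain ⟨G, hG, hGA, hGF'⟩ := exists_fg_quotients hF' fun k hk => (memA' k).1 (hFA' hk)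
  refine ⟨F ⊔ G, Submodule.FG.sup hF hG, fun a ha => ?_, ?_⟩
  · obtain ⟨x, hx, y, hy, rfl⟩ := Submodule.mem_sup.1 ha
    rw [mul_add]; exact dvd_add ((memA x).1 (hFA hx)) (hGA y hy)
  · rintro M hM ⟨m, hm, u, hu⟩ hle
    have hMp := tMax_isPrime hM
    have hF'M : F' ≤ M := by
      intro k hk
      obtain ⟨a, ha, e⟩ := hGF' k hk
      -- `m k = m (c / d) a = u a` with `a ∈ M`.
      have : m * k = u * a := mul_left_cancel₀ hd (by linear_combination m * e + a * hu)
      have haM : u * a ∈ M := Ideal.mul_mem_left _ _ (hle (Submodule.mem_sup_right ha))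
      exact (hMp.mem_or_mem (this ▸ haM : m * k ∈ M)).resolve_left hm
    exact hMp.ne_top ((Ideal.eq_top_iff_one _).2 ((isTIdeal_iff.1 hM.1).2 J h1 h2
      (hJ.trans (sup_le (le_sup_left.trans hle) hF'M)) h4))

/-- A `t`-prime contains a finitely generated ideal lying in no maximal `t`-ideal other than
those containing `P`. -/
lemma exists_fg_separating (hR : IsPVMD R)
    (H : ∀ T : Subring (FractionRing R), IsOverring R T → IsTLinked R T → IsTSharp T)
    {P : Ideal R} (hP : IsTPrime R P) :
    ∃ F : Ideal R, F.FG ∧ F ≤ P ∧ ∀ M ∈ tMax R, ¬ P ≤ M → ¬ F ≤ M := by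
  obtain ⟨c, d, hd, h, h'⟩ := exists_separating_fraction hR H hP
  obtain ⟨F, hF, hFA, hFM⟩ := exists_fg_conductor hR (c := c) hd
  refine ⟨F, hF, fun a ha => ?_, fun M hM hPM => hFM M hM (h M hM hPM)⟩
  by_contra haP
  exact h' a haP (hFA a ha)

/-! ### From the `t#`-property to `v`-finiteness -/

/-- `(P²)_t` is `P`-primary, in the form needed here. -/
lemma mem_tIdeal_sq (hR : IsPVMD R) {P : Ideal R} (hP : IsTPrime R P) {a s p q : R}
    (hs : s ∉ P) (hp : p ∈ P) (hq : q ∈ P) (e : s * a = p * q) : a ∈ tIdeal R (P * P) := by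
  have hne : P * P ≠ ⊥ := by
    rw [← Ideal.zero_eq_bot]
    exact mul_ne_zero hP.2.1 hP.2.1
  have haP : a ∈ P := (hP.1.mem_or_mem (e ▸ Ideal.mul_mem_right _ _ hp : s * a ∈ P)).resolve_left hs
  refine mem_tIdeal_of_local hne fun M hM => ?_
  by_cases hPM : P ≤ M
  · obtain ⟨t, ht, ⟨r, hr⟩ | ⟨r, hr⟩⟩ := hR.valAt hM s p
    · have hrP : r ∈ P := (hP.1.mem_or_mem (hr ▸ Ideal.mul_mem_left _ _ hp : s * r ∈ P)).resolve_left hs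
      have hs0 : s ≠ 0 := fun e' => hs (e' ▸ zero_mem _)
      refine ⟨t, ht, ?_⟩
      rw [show t * a = r * q from mul_left_cancel₀ hs0 (by linear_combination t * e + q * hr)]
      exact Ideal.mul_mem_mul hrP hq
    · exfalso
      have : t * s ∈ P := hr ▸ Ideal.mul_mem_right _ _ hp
      exact (hP.1.mem_or_mem this).elim (fun h => ht (hPM h)) hs
  · obtain ⟨t, ht, htM⟩ := SetLike.not_le_iff_exists.1 hPM
    exact ⟨t, htM, Ideal.mul_mem_mul ht haP⟩

/-- The key finiteness statement: `(P²)_t ⊆ G_v` for a finitely generated ideal `G ⊆ P`. Take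
`G = F + aR` with `F` separating `P` from the maximal `t`-ideals not containing it and
`a ∈ P ∖ (P²)_t`; then `P² R_M ⊆ G R_M` for every maximal `t`-ideal `M`. -/
lemma exists_fg_tIdeal_sq_le (hR : IsPVMD R)
    (H : ∀ T : Subring (FractionRing R), IsOverring R T → IsTLinked R T → IsTSharp T)
    {P : Ideal R} (hP : IsTPrime R P) (hPP : P ≠ tIdeal R (P * P)) :
    ∃ G : Ideal R, G.FG ∧ G ≠ ⊥ ∧ G ≤ P ∧ tIdeal R (P * P) ≤ vIdeal R G := by
  obtain ⟨F, hF, hFP, hFM⟩ := exists_fg_separating hR H hP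
  obtain ⟨a, ha, haPP⟩ : ∃ a ∈ P, a ∉ tIdeal R (P * P) := by
    by_contra! hle
    exact hPP (le_antisymm hle (tIdeal_le Ideal.mul_le_right hP.2))
  have hG0 : F ⊔ Ideal.span {a} ≠ ⊥ := by
    intro e
    have : a = 0 := by simpa using (sup_eq_bot_iff.1 e).2
    exact haPP (this ▸ zero_mem _)
  have hT := isTIdeal_vIdeal hG0
  have haG : a ∈ F ⊔ Ideal.span {a} := Submodule.mem_sup_right (Ideal.subset_span rfl)
  refine ⟨F ⊔ Ideal.span {a}, Submodule.FG.sup hF ⟨{a}, by simp⟩, hG0,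
    sup_le hFP (by simpa [Ideal.span_le] using ha), tIdeal_le (Ideal.mul_le.2 ?_) hT⟩
  intro p hp q hq
  refine tIdeal_le (le_vIdeal_s13 _) hT (mem_tIdeal_of_local hG0 fun M hM => ?_)
  by_cases hPM : P ≤ M
  · obtain ⟨s, hs, hd | ⟨k, hk⟩⟩ := hR.valAt hM a (p * q)
    · exact ⟨s, hs, Ideal.mem_of_dvd _ hd haG⟩
    · exact absurd (mem_tIdeal_sq hR hP (fun h => hs (hPM h)) hp
        (Ideal.mul_mem_right k _ hq) (hk.trans (mul_assoc _ _ _))) haPP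
  · obtain ⟨f, hf, hfM⟩ := SetLike.not_le_iff_exists.1 (hFM M hM hPM)
    exact ⟨f, hfM, Ideal.mul_mem_right _ _ (Submodule.mem_sup_left hf)⟩

/-- A `t`-ideal maximal among those containing no `v`-finite member of a `t`-localizing system
`Φ` is prime. -/
lemma isPrime_of_maximal {Φ : Set (Ideal R)} (hΦ : IsTLocalizingSystem R Φ) {P : Ideal R}
    (hP : IsTIdeal R P) (hP' : P ≠ ⊤)
    (hno : ¬ ∃ J ∈ Φ, J ≤ P ∧ IsVFinite R J)
    (hmax : ∀ I, IsTIdeal R I → P ≤ I → I ≠ P → ∃ J ∈ Φ, J ≤ I ∧ IsVFinite R J) :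
    P.IsPrime := by
  refine ⟨hP', fun {a b} hab => ?_⟩
  by_contra! hne
  have hP0 : P ⊔ Ideal.span {a} ≠ ⊥ := fun e => hP.1 (sup_eq_bot_iff.1 e).1
  obtain ⟨J₁, hJ₁, hle₁, hf₁⟩ := hmax _ (isTIdeal_tIdeal hP0) (le_sup_left.trans le_tIdeal)
    (fun e => hne.1 (e ▸ le_tIdeal (Submodule.mem_sup_right (Ideal.subset_span rfl))))
  obtain ⟨J₂, hJ₂, hle₂, hf₂⟩ := hmax (cond P a) (isTIdeal_cond hP a)
    (fun r hr => Ideal.mul_mem_right _ _ hr)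
    (fun e => hne.2 (e ▸ mem_cond.2 (by rwa [mul_comm])))
  obtain ⟨F, h1, h2, rfl⟩ := hf₁.exists_ne_bot (hΦ.1 _ hJ₁).1
  obtain ⟨G, k1, k2, rfl⟩ := hf₂.exists_ne_bot (hΦ.1 _ hJ₂).1
  have hFG0 : F * G ≠ ⊥ := by
    rw [← Ideal.zero_eq_bot]
    exact mul_ne_zero h2 k2
  have hT := isTIdeal_vIdeal hFG0
  refine hno ⟨vIdeal R (F * G), hΦ.2.2.1 _ (hΦ.2.1 _ hJ₁ _ hJ₂) _ hT
    (tIdeal_le (Ideal.mul_le.2 fun x hx y hy => mul_mem_vIdeal hx hy) hT),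
    (isTIdeal_iff.1 hP).2 _ (h1.mul k1) hFG0 ?_, F * G, h1.mul k1, rfl⟩
  rw [Ideal.mul_le]
  intro f hf g hg
  have hg' : g * a ∈ P := hle₂ (le_vIdeal_s13 _ hg)
  have hle : P ⊔ Ideal.span {a} ≤ cond P g := by
    refine sup_le (fun r hr => Ideal.mul_mem_right _ _ hr) ?_
    rw [Ideal.span_singleton_le_iff_mem, mem_cond, mul_comm]
    exact hg'
  exact tIdeal_le hle (isTIdeal_cond hP g) (hle₁ (le_vIdeal_s13 _ hf))

lemma vFinite_of_linked (hR : IsPVMD R)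
    (H : ∀ T : Subring (FractionRing R), IsOverring R T → IsTLinked R T → IsTSharp T)
    (H' : ∀ P : Ideal R, IsTPrime R P → P ≠ tIdeal R (P * P))
    {Φ : Set (Ideal R)} (hΦ : IsTLocalizingSystem R Φ) {I : Ideal R} (hI : I ∈ Φ) :
    ∃ J ∈ Φ, J ≤ I ∧ IsVFinite R J := by
  by_contra hno
  obtain ⟨P, hIP, hP⟩ := zorn_le_nonempty₀
    {J : Ideal R | IsTIdeal R J ∧ ¬ ∃ J' ∈ Φ, J' ≤ J ∧ IsVFinite R J'} (by
      intro c hc hch y hy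
      have hT := isTIdeal_sSup hch ⟨y, hy⟩ fun J hJ => (hc hJ).1
      refine ⟨sSup c, ⟨hT, ?_⟩, fun z hz => le_sSup hz⟩
      rintro ⟨J', hJ', hle, hf⟩
      obtain ⟨F, h1, h2, rfl⟩ := hf.exists_ne_bot (hΦ.1 _ hJ').1
      obtain ⟨J, hJ, hFJ⟩ := (Submodule.fg_iff_compact F).1 h1 c _ ⟨y, hy⟩ hch.directedOn
        (isLUB_sSup c) ((le_vIdeal_s13 F).trans hle)
      exact (hc hJ).2 ⟨_, hJ', (isTIdeal_iff.1 (hc hJ).1).2 F h1 h2 hFJ, F, h1, rfl⟩)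
    I ⟨hΦ.1 _ hI, hno⟩
  have hPΦ : P ∈ Φ := hΦ.2.2.1 _ hI _ hP.prop.1 hIP
  have hPtop : P ≠ ⊤ := by
    rintro rfl
    refine hP.prop.2 ⟨⊤, hPΦ, le_rfl, ⊤, ⟨{1}, by simp⟩, ?_⟩
    exact (top_le_iff.1 (le_vIdeal_s13 _)).symm
  have hPt : IsTPrime R P := by
    refine ⟨isPrime_of_maximal hΦ hP.prop.1 hPtop hP.prop.2 fun J hJ hle hne => ?_, hP.prop.1⟩
    by_contra hnoJ
    exact hne (hP.eq_of_le ⟨hJ, hnoJ⟩ hle).symm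
  obtain ⟨G, h1, h2, h3, h4⟩ := exists_fg_tIdeal_sq_le hR H hPt (H' P hPt)
  exact hP.prop.2 ⟨vIdeal R G, hΦ.2.2.1 _ (hΦ.2.1 _ hPΦ _ hPΦ) _ (isTIdeal_vIdeal h2) h4,
    (isTIdeal_iff.1 hPt.2).2 G h1 h2 h3, G, h1, rfl⟩

end Backward

/-- **Corollary (2.17).**  A PVMD `R` is a Generalized Krull domain (every `t`-localizing
system of ideals of `R` is `v`-finite) if and only if each `t`-linked overring of `R` is a
`t#`-domain and `P ≠ (P²)_t` for each `t`-prime `P` of `R`. -/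
theorem pvmd_generalized_krull_iff (R : Type*) [CommRing R] [IsDomain R]
    (hR : IsPVMD R) :
    (∀ Φ : Set (Ideal R), IsTLocalizingSystem R Φ → ∀ I ∈ Φ, ∃ J ∈ Φ, J ≤ I ∧ IsVFinite R J)
      ↔
    ((∀ T : Subring (FractionRing R), IsOverring R T → IsTLinked R T → IsTSharp ↥T) ∧
      ∀ P : Ideal R, IsTPrime R P → P ≠ tIdeal R (P * P)) := by
  constructor
  · exact fun H => ⟨fun T h hT => isTSharp_of_linked hR H h hT, fun P hP => ne_tIdeal_sq hR H hP⟩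
  · rintro ⟨H, H'⟩ Φ hΦ I hI
    exact vFinite_of_linked hR H H' hΦ hI

end TSharpPaper
end
end
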